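/- arXiv:0901.2621 — 18 statements merged into one kernel-verified Lean document; each statement's English description precedes it below -/
import Mathlib

section
/- Let X be a connected, locally finite T0 Alexandroff space. Then X is infinite if and only if there exists a subset A of X such that A ⊆ min(X) ∪ max(X) (A is spanning), A with the induced specialization order is order-isomorphic to the Khalimsky half-line, and A is isometric in X, i.e. d_A(x,y) = d_X(x,y) for all x,y ∈ A. -/
/-- Specialization order on a topological space: `x ≤ y` iff `y ∈ closure {x}`. -/
def specLE {X : Type*} [TopologicalSpace X] (x y : X) : Prop := y ∈ closure ({x} : Set X)

/-- Comparability in the specialization order. -/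
def specComp {X : Type*} [TopologicalSpace X] (x y : X) : Prop := specLE x y ∨ specLE y x

/-- `IsSPathIn S x y n`: there is an s-path of length `n` from `x` to `y` whose points lie
in `S` (pairwise distinct points, consecutive points comparable). -/
def IsSPathIn {X : Type*} [TopologicalSpace X] (S : Set X) (x y : X) (n : ℕ) : Prop :=
  ∃ p : Fin (n + 1) → X, Function.Injective p ∧ (∀ i, p i ∈ S) ∧
    p 0 = x ∧ p (Fin.last n) = y ∧ ∀ i : Fin n, specComp (p i.castSucc) (p i.succ)

/-- `sDist S x y`: minimal length of an s-path from `x` to `y` within `S` (`∞` if none). -/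
noncomputable def sDist {X : Type*} [TopologicalSpace X] (S : Set X) (x y : X) : ℕ∞ :=
  sInf {m : ℕ∞ | ∃ n : ℕ, m = (n : ℕ∞) ∧ IsSPathIn S x y n}

/-- The order of the Khalimsky half-line on `ℕ`: `n ⊑ m` iff `n = m`, or `|n - m| = 1`
and `m` is even. -/
def khalimskyLE (n m : ℕ) : Prop := n = m ∨ ((n + 1 = m ∨ m + 1 = n) ∧ Even m)

theorem specLE_trans' {X : Type*} [TopologicalSpace X] {x y z : X} (h : specLE x y)
    (h2 : specLE y z) : specLE x z := by
  have a : x ⤳ y := specializes_iff_mem_closure.2 h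
  have b : y ⤳ z := specializes_iff_mem_closure.2 h2
  exact specializes_iff_mem_closure.1 (a.trans b)

theorem specLE_refl' {X : Type*} [TopologicalSpace X] (x : X) : specLE x x :=
  subset_closure rfl

theorem specLE_antisymm' {X : Type*} [TopologicalSpace X] [T0Space X] {x y : X} (h : specLE x y)
    (h2 : specLE y x) : x = y := by
  have a : x ⤳ y := specializes_iff_mem_closure.2 h
  have b : y ⤳ x := specializes_iff_mem_closure.2 h2
  exact (a.antisymm b).eq

theorem exists_maxOf {X : Type*} [TopologicalSpace X] [T0Space X]
    (hlf : ∀ x : X, {y : X | specComp x y}.Finite) (x : X) :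
    ∃ m, specLE x m ∧ ∀ y, specLE m y → y = m := by
  letI : PartialOrder X :=
    { le := specLE, le_refl := specLE_refl', le_trans := fun _ _ _ => specLE_trans',
      le_antisymm := fun _ _ => specLE_antisymm' }
  have hf : {y : X | x ≤ y}.Finite := (hlf x).subset fun y hy => Or.inl hy
  obtain ⟨m, hm⟩ := hf.exists_maximal ⟨x, le_refl x⟩
  refine ⟨m, hm.1, fun y hy => ?_⟩
  exact (hm.eq_of_le (le_trans (show x ≤ m from hm.1) hy) hy).symm

theorem exists_minOf {X : Type*} [TopologicalSpace X] [T0Space X]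
    (hlf : ∀ x : X, {y : X | specComp x y}.Finite) (x : X) :
    ∃ m, specLE m x ∧ ∀ y, specLE y m → y = m := by
  letI : PartialOrder X :=
    { le := specLE, le_refl := specLE_refl', le_trans := fun _ _ _ => specLE_trans',
      le_antisymm := fun _ _ => specLE_antisymm' }
  have hf : {y : X | y ≤ x}.Finite := (hlf x).subset fun y hy => Or.inr hy
  obtain ⟨m, hm⟩ := hf.exists_minimal ⟨x, le_refl x⟩
  refine ⟨m, hm.1, fun y hy => ?_⟩
  exact (hm.eq_of_ge (le_trans hy (show m ≤ x from hm.1)) hy).symm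

/-- comparability graph -/
def compG (X : Type*) [TopologicalSpace X] : SimpleGraph X where
  Adj x y := x ≠ y ∧ specComp x y
  symm := ⟨fun _ _ h => ⟨h.1.symm, h.2.symm⟩⟩
  loopless := ⟨fun _ h => h.1 rfl⟩

theorem compG_reach {X : Type*} [TopologicalSpace X] {x y : X} (h : specComp x y) :
    (compG X).Reachable x y := by
  by_cases e : x = y
  · subst e; exact SimpleGraph.Reachable.refl _
  · exact SimpleGraph.Adj.reachable (show (compG X).Adj x y from ⟨e, h⟩)

theorem compG_conn (X : Type*) [TopologicalSpace X] [AlexandrovDiscrete X]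
    [ConnectedSpace X] : (compG X).Connected := by
  haveI : Nonempty X := ConnectedSpace.toNonempty
  refine SimpleGraph.Connected.mk fun x => ?_
  have key : ∀ S : Set X, (∀ a b, specComp a b → b ∈ S → a ∈ S) → IsOpen S := by
    intro S hS
    rw [isOpen_iff_forall_specializes]
    intro a b hab hb
    exact hS a b (Or.inl (specializes_iff_mem_closure.1 hab)) hb
  have hc : IsClopen {y | (compG X).Reachable x y} := by
    constructor
    · rw [← isOpen_compl_iff]
      apply key
      intro a b hab hb ha
      exact hb (SimpleGraph.Reachable.trans ha (compG_reach hab))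
    · apply key
      intro a b hab hb
      exact SimpleGraph.Reachable.trans hb (compG_reach hab).symm
  have := hc.eq_univ ⟨x, SimpleGraph.Reachable.refl _⟩
  intro y
  have h : y ∈ (Set.univ : Set X) := trivial
  rw [← this] at h
  exact h

theorem compG_lev {X : Type*} [TopologicalSpace X] (hc : (compG X).Connected) (r : X) {u v : X}
    (h : specComp u v) : (compG X).dist r v ≤ (compG X).dist r u + 1 := by
  by_cases e : u = v
  · subst e; omega
  · have h1 : (compG X).dist u v = 1 := SimpleGraph.dist_eq_one_iff_adj.2 ⟨e, h⟩
    have := hc.dist_triangle (u := r) (v := u) (w := v)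
    omega

/-- cone -/
def cone {X : Type*} [TopologicalSpace X] (r v : X) : Set X :=
  {w | (compG X).dist r w = (compG X).dist r v + (compG X).dist v w}

theorem cone_step {X : Type*} [TopologicalSpace X] (hc : (compG X).Connected)
    (hlf : ∀ x : X, {y : X | specComp x y}.Finite) (r v : X) (hv : (cone r v).Infinite) :
    ∃ u, specComp v u ∧ (compG X).dist r u = (compG X).dist r v + 1 ∧ (cone r u).Infinite := by
  by_contra! hcon
  apply hv
  have hfin : ({v} ∪ ⋃ u ∈ {u | specComp v u ∧ (compG X).dist r u = (compG X).dist r v + 1},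
      cone r u).Finite := by
    refine (Set.finite_singleton v).union (Set.Finite.biUnion ((hlf v).subset fun u h => h.1) ?_)
    intro u hu
    exact hcon u hu.1 hu.2
  refine hfin.subset fun w hw => ?_
  obtain ⟨p, hp⟩ := hc.exists_walk_length_eq_dist v w
  have hw' : (compG X).dist r w = (compG X).dist r v + (compG X).dist v w := hw
  cases p with
  | nil => left; rfl
  | @cons _ u _ hadj q =>
    right
    have h1 : (compG X).dist u w ≤ q.length := SimpleGraph.dist_le q
    rw [SimpleGraph.Walk.length_cons] at hp
    have h2 := compG_lev hc r hadj.2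
    have h3 := hc.dist_triangle (u := r) (v := u) (w := w)
    refine Set.mem_biUnion (x := u) ⟨hadj.2, by omega⟩ ?_
    show (compG X).dist r w = (compG X).dist r u + (compG X).dist u w
    omega

theorem exists_ray {X : Type*} [TopologicalSpace X] [Infinite X] (hc : (compG X).Connected)
    (hlf : ∀ x : X, {y : X | specComp x y}.Finite) (r : X) :
    ∃ x : ℕ → X, x 0 = r ∧ (∀ n, specComp (x n) (x (n+1))) ∧
      ∀ n, (compG X).dist r (x n) = n := by
  choose f hf1 hf2 hf3 using cone_step hc hlf r
  have h0 : (cone r r).Infinite := by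
    have : cone r r = Set.univ := by
      ext w; simp [cone]
    rw [this]; exact Set.infinite_univ
  let s : ℕ → {v : X // (cone r v).Infinite} :=
    fun n => Nat.rec ⟨r, h0⟩ (fun _ v => ⟨f v.1 v.2, hf3 v.1 v.2⟩) n
  refine ⟨fun n => (s n).1, rfl, fun n => hf1 _ _, fun n => ?_⟩
  induction n with
  | zero => exact SimpleGraph.dist_self
  | succ n ih => 
    have := hf2 (s n).1 (s n).2
    rw [ih] at this
    exact this

theorem path_lower {X : Type*} [TopologicalSpace X] (hc : (compG X).Connected) (r : X) {S : Set X}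
    {a b : X} {n : ℕ} (h : IsSPathIn S a b n) :
    (compG X).dist r b ≤ (compG X).dist r a + n ∧ (compG X).dist r a ≤ (compG X).dist r b + n := by
  obtain ⟨p, -, -, h0, h1, hs⟩ := h
  have key : ∀ k (hk : k < n + 1), (compG X).dist r (p ⟨k, hk⟩) ≤ (compG X).dist r a + k ∧
      (compG X).dist r a ≤ (compG X).dist r (p ⟨k, hk⟩) + k := by
    intro k
    induction k with
    | zero => intro hk; rw [← h0]; exact ⟨le_rfl, le_rfl⟩
    | succ k ih =>
      intro hk
      have h2 := ih (by omega)
      have h3 : specComp (p ⟨k, by omega⟩) (p ⟨k+1, hk⟩) := hs ⟨k, by omega⟩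
      have h4 := compG_lev hc r h3
      have h5 := compG_lev hc r h3.symm
      omega
  have := key n (by omega)
  rw [← h1]
  exact this

theorem exists_good {X : Type*} [TopologicalSpace X] [T0Space X] [Infinite X]
    (hc : (compG X).Connected) (hlf : ∀ x : X, {y : X | specComp x y}.Finite) :
    ∃ (r : X) (e : ℕ → X), (∀ n, (compG X).dist r (e n) = n) ∧
      (∀ n, Even n → ∀ y, specLE (e n) y → y = e n) ∧
      (∀ n, ¬ Even n → ∀ y, specLE y (e n) → y = e n) ∧
      (∀ n, Even n → specLE (e (n+1)) (e n)) ∧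
      (∀ n, ¬ Even n → specLE (e n) (e (n+1))) := by
  obtain ⟨r, -, hr⟩ := exists_maxOf hlf (Classical.arbitrary X)
  obtain ⟨x, hx0, hxs, hxd⟩ := exists_ray hc hlf r
  choose M hM1 hM2 using exists_maxOf hlf
  choose m hm1 hm2 using exists_minOf hlf
  have hdir : ∀ n, (Even n → specLE (x (n+1)) (x n)) ∧ (¬ Even n → specLE (x n) (x (n+1))) := by
    intro n
    induction n with
    | zero =>
      refine ⟨fun _ => ?_, fun h => absurd Even.zero h⟩
      rcases hxs 0 with h | h
      · rw [hx0] at h ⊢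
        rw [hr _ h]; exact specLE_refl' _
      · exact h
    | succ n ih =>
      have no : ¬ specComp (x n) (x (n+2)) := by
        intro h
        have := compG_lev hc r h
        rw [hxd, hxd] at this
        omega
      rw [Nat.even_add_one]
      constructor
      · intro h
        rcases hxs (n+1) with h1 | h1
        · exact absurd (Or.inl (specLE_trans' (ih.2 h) h1)) no
        · exact h1
      · intro h
        rcases hxs (n+1) with h1 | h1
        · exact h1
        · exact absurd (Or.inr (specLE_trans' h1 (ih.1 (not_not.1 h)))) no
  let e : ℕ → X := fun n => if Even n then M (x n) else m (x n)
  have he1 : ∀ n, Even n → e n = M (x n) := fun n h => if_pos h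
  have he2 : ∀ n, ¬ Even n → e n = m (x n) := fun n h => if_neg h
  have hnext : ∀ n, specComp (e n) (x (n+1)) := by
    intro n
    by_cases h : Even n
    · rw [he1 n h]; exact Or.inr (specLE_trans' ((hdir n).1 h) (hM1 _))
    · rw [he2 n h]; exact Or.inl (specLE_trans' (hm1 _) ((hdir n).2 h))
  have hprev : ∀ n, specComp (x n) (e (n+1)) := by
    intro n
    by_cases h : Even n
    · rw [he2 (n+1) (by simpa [Nat.even_add_one] using h)]
      exact Or.inr (specLE_trans' (hm1 _) ((hdir n).1 h))
    · rw [he1 (n+1) (by simpa [Nat.even_add_one] using h)]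
      exact Or.inl (specLE_trans' ((hdir n).2 h) (hM1 _))
  refine ⟨r, e, ?_, ?_, ?_, ?_, ?_⟩
  · intro n
    have h1 := compG_lev hc r (hnext n)
    rw [hxd] at h1
    cases n with
    | zero =>
      have : e 0 = r := by
        rw [he1 0 Even.zero, hx0]; exact hr _ (hM1 r)
      rw [this]; exact SimpleGraph.dist_self
    | succ n =>
      have h2 := compG_lev hc r (hprev n)
      rw [hxd] at h2
      omega
  · intro n h; rw [he1 n h]; exact hM2 _
  · intro n h; rw [he2 n h]; exact hm2 _
  · intro n h
    rw [he1 n h, he2 (n+1) (by simpa [Nat.even_add_one] using h)]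
    exact specLE_trans' (hm1 _) (specLE_trans' ((hdir n).1 h) (hM1 _))
  · intro n h
    rw [he2 n h, he1 (n+1) (by simpa [Nat.even_add_one] using h)]
    exact specLE_trans' (hm1 _) (specLE_trans' ((hdir n).2 h) (hM1 _))

/-- A connected, locally finite T0 Alexandroff space is infinite iff it contains an
isometric, spanning subset order-isomorphic to the Khalimsky half-line. -/
theorem stmt0 {X : Type*} [TopologicalSpace X] [AlexandrovDiscrete X] [T0Space X]
    [ConnectedSpace X] (hlf : ∀ x : X, {y : X | specComp x y}.Finite) :
    Infinite X ↔
      ∃ A : Set X,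
        (A ⊆ {x : X | ∀ y, specLE y x → y = x} ∪ {x : X | ∀ y, specLE x y → y = x}) ∧
        (∃ e : ℕ → X, Function.Injective e ∧ Set.range e = A ∧
          ∀ n m : ℕ, khalimskyLE n m ↔ specLE (e n) (e m)) ∧
        (∀ x ∈ A, ∀ y ∈ A, sDist A x y = sDist Set.univ x y) := by
  constructor
  · intro hinf
    have hc := compG_conn X
    obtain ⟨r, e, hd, hmax, hmin, hev, hod⟩ := exists_good hc hlf
    have hinj : Function.Injective e := by
      intro i j h
      rw [← hd i, ← hd j, h]
    have hcomp : ∀ n, specComp (e n) (e (n+1)) := by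
      intro n
      by_cases h : Even n
      · exact Or.inr (hev n h)
      · exact Or.inl (hod n h)
    refine ⟨Set.range e, ?_, ⟨e, hinj, rfl, ?_⟩, ?_⟩
    · rintro _ ⟨n, rfl⟩
      by_cases h : Even n
      · exact Or.inr (hmax n h)
      · exact Or.inl (hmin n h)
    · intro n m
      constructor
      · rintro (h | ⟨h | h, hm⟩)
        · subst h; exact specLE_refl' _
        · subst h
          exact hod n (by simpa [Nat.even_add_one] using hm)
        · subst h
          exact hev m hm
      · intro h
        by_cases hnm : n = m
        · exact Or.inl hnm
        right
        have h1 := compG_lev hc r (Or.inl h)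
        have h2 := compG_lev hc r (Or.inr h)
        rw [hd, hd] at h1 h2
        refine ⟨by omega, ?_⟩
        by_contra hm
        exact hnm (hinj (hmin m hm _ h))
    · rintro _ ⟨i, rfl⟩ _ ⟨j, rfl⟩
      apply le_antisymm
      · apply le_sInf
        rintro _ ⟨n, rfl, hn⟩
        have hl := path_lower hc r hn
        rw [hd, hd] at hl
        rcases le_total i j with hij | hij
        · refine le_trans (sInf_le ⟨j - i, rfl, ?_⟩) (Nat.cast_le.2 (by omega : j - i ≤ n))
          refine ⟨fun k => e (i + k), ?_, fun k => ⟨_, rfl⟩, by simp, ?_, ?_⟩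
          · intro a b h
            have := hinj h
            exact Fin.ext (by omega)
          · simp only [Fin.val_last]; congr 1; omega
          · intro k
            exact hcomp (i + k)
        · refine le_trans (sInf_le ⟨i - j, rfl, ?_⟩) (Nat.cast_le.2 (by omega : i - j ≤ n))
          refine ⟨fun k => e (i - k), ?_, fun k => ⟨_, rfl⟩, by simp, ?_, ?_⟩
          · intro a b h
            have := hinj h
            exact Fin.ext (by omega)
          · simp only [Fin.val_last]; congr 1; omega
          · intro k
            have := hcomp (i - (k + 1))
            have h2 : i - (k.1 + 1) + 1 = i - k := by omega
            rw [h2] at this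
            exact this.symm
      · apply sInf_le_sInf
        rintro _ ⟨n, rfl, p, h1, -, h3⟩
        exact ⟨n, rfl, p, h1, fun _ => trivial, h3⟩
  · rintro ⟨A, -, ⟨e, he, -⟩, -⟩
    exact Infinite.of_injective e he
end

section
/- If X is an infinite, locally finite T0 Alexandroff space, then X does not have the fixed point property: there exists a continuous map f : X → X with f(x) ≠ x for every x ∈ X. -/
theorem aux_step {V : Type*} (G : SimpleGraph V) (hG : G.Connected) {u w : V} (h : u ≠ w) :
    ∃ z, G.Adj u z ∧ G.dist u w = G.dist z w + 1 := by
  obtain ⟨p, hp⟩ := hG.exists_walk_length_eq_dist u w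
  cases p with
  | nil => exact absurd rfl h
  | @cons _ z _ ha q =>
    refine ⟨z, ha, ?_⟩
    have h1 := SimpleGraph.dist_le q
    have h2 := hG.dist_triangle (u := u) (v := z) (w := w)
    have h3 := (SimpleGraph.dist_eq_one_iff_adj (G := G)).2 ha
    simp only [SimpleGraph.Walk.length_cons] at hp
    omega

theorem aux_ray {V : Type*} [Infinite V] (G : SimpleGraph V) (hG : G.Connected)
    (hf : ∀ x, {y | G.Adj x y}.Finite) (x0 : V) :
    ∃ g : ℕ → V, (∀ n, G.dist x0 (g n) = n) ∧ ∀ n, G.Adj (g n) (g (n + 1)) := by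
  let S : V → Set V := fun y => {w | G.dist x0 w = G.dist x0 y + G.dist y w}
  have key : ∀ y : {y // (S y).Infinite}, ∃ z : {z // (S z).Infinite},
      G.Adj y z ∧ G.dist x0 z = G.dist x0 y + 1 := by
    rintro ⟨y, hy⟩
    by_contra! hcon
    apply hy
    have hfin : ({z | G.Adj y z} ∩ {z | G.dist x0 z = G.dist x0 y + 1}).Finite :=
      (hf y).subset Set.inter_subset_left
    have hU : (⋃ z ∈ ({z | G.Adj y z} ∩ {z | G.dist x0 z = G.dist x0 y + 1}), S z).Finite := by
      refine hfin.biUnion ?_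
      rintro z ⟨hz1, hz2⟩
      by_contra hinf
      exact hcon ⟨z, hinf⟩ hz1 hz2
    refine (hU.union (Set.finite_singleton y)).subset ?_
    intro w hw
    by_cases hyw : y = w
    · right; exact hyw.symm
    left
    obtain ⟨z, hz, hd⟩ := aux_step G hG hyw
    have h1 := hG.dist_triangle (u := x0) (v := y) (w := z)
    have h2 := hG.dist_triangle (u := x0) (v := z) (w := w)
    have h3 := (SimpleGraph.dist_eq_one_iff_adj (G := G)).2 hz
    have hw' : G.dist x0 w = G.dist x0 y + G.dist y w := hw
    simp only [Set.mem_iUnion]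
    refine ⟨z, ⟨hz, ?_⟩, ?_⟩
    · show G.dist x0 z = _
      omega
    · show G.dist x0 w = _
      omega
  have h0 : (S x0).Infinite := by
    have : S x0 = Set.univ := by
      ext w; simp [S]
    rw [this]; exact Set.infinite_univ
  choose nx hn1 hn2 using key
  let g : ℕ → {y // (S y).Infinite} := fun n => Nat.rec ⟨x0, h0⟩ (fun _ y => nx y) n
  refine ⟨fun n => (g n).1, ?_, fun n => hn1 (g n)⟩
  intro n
  induction n with
  | zero => simp [g]
  | succ n ih =>
    have := hn2 (g n)
    rw [ih] at this
    exact this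

theorem aux_poset {X : Type*} [PartialOrder X] [Infinite X]
    (hlf : ∀ x : X, {y : X | x ≤ y ∨ y ≤ x}.Finite) :
    ∃ f : X → X, Monotone f ∧ ∀ x, f x ≠ x := by
  classical
  let G : SimpleGraph X :=
    { Adj := fun x y => x ≠ y ∧ (x ≤ y ∨ y ≤ x)
      symm := ⟨fun x y h => ⟨h.1.symm, h.2.symm⟩⟩
      loopless := ⟨fun x h => h.1 rfl⟩ }
  by_cases hpre : G.Preconnected
  swap
  · unfold SimpleGraph.Preconnected at hpre
    push Not at hpre
    obtain ⟨a, b, hab⟩ := hpre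
    refine ⟨fun x => if G.Reachable a x then b else a, ?_, ?_⟩
    · intro x y hxy
      have hr : G.Reachable x y := by
        by_cases h : x = y
        · subst h; exact SimpleGraph.Reachable.refl _
        · exact SimpleGraph.Adj.reachable (G := G) ⟨h, Or.inl hxy⟩
      have : G.Reachable a x ↔ G.Reachable a y := ⟨fun h => h.trans hr, fun h => h.trans hr.symm⟩
      simp only [this]; exact le_rfl
    · intro x hx
      dsimp only at hx
      split_ifs at hx with h
      · subst hx; exact hab h
      · subst hx; exact h (SimpleGraph.Reachable.refl _)
  have hG : G.Connected := ⟨hpre⟩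
  obtain ⟨x0, hmin⟩ : ∃ x0 : X, ∀ y, y ≤ x0 → y = x0 := by
    obtain ⟨a⟩ : Nonempty X := inferInstance
    have hfa : {y : X | y ≤ a}.Finite := (hlf a).subset fun y hy => Or.inr hy
    obtain ⟨m, hm⟩ := hfa.exists_minimal ⟨a, le_refl a⟩
    exact ⟨m, fun y hy => le_antisymm hy (hm.2 (le_trans hy hm.1) hy)⟩
  obtain ⟨g, hg, hadj⟩ := aux_ray G hG (fun x => (hlf x).subset fun y hy => hy.2) x0
  have hd1 : ∀ x y : X, (x ≤ y ∨ y ≤ x) → G.dist x0 y ≤ G.dist x0 x + 1 := by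
    intro x y h
    by_cases hxy : x = y
    · subst hxy; omega
    · have h1 := hG.dist_triangle (u := x0) (v := x) (w := y)
      have h3 := (SimpleGraph.dist_eq_one_iff_adj (G := G)).2 (show G.Adj x y from ⟨hxy, h⟩)
      omega
  have par : ∀ n : ℕ, ∀ x y : X, (x ≤ y ∨ y ≤ x) → G.dist x0 x = n → G.dist x0 y = n + 1 →
      (Even n → x ≤ y) ∧ (¬ Even n → y ≤ x) := by
    intro n
    induction n with
    | zero =>
      intro x y h hx hy
      have : x0 = x := hG.dist_eq_zero_iff.1 hx
      subst this
      refine ⟨fun _ => ?_, fun h => absurd Even.zero h⟩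
      rcases h with h | h
      · exact h
      · rw [hmin y h]
    | succ n ih =>
      intro x y h hx hy
      have hne : x ≠ x0 := by
        rintro rfl; simp at hx
      obtain ⟨z, hz, hzd⟩ := aux_step G hG hne
      rw [SimpleGraph.dist_comm, hx, SimpleGraph.dist_comm] at hzd
      obtain ⟨i1, i2⟩ := ih z x hz.2.symm (by omega) hx
      rw [Nat.even_add_one]
      constructor
      · intro hn
        rcases h with h | h
        · exact h
        · have := hd1 z y (Or.inr (h.trans (i2 hn)))
          omega
      · intro hn
        rw [not_not] at hn
        rcases h with h | h
        · have := hd1 z y (Or.inl ((i1 hn).trans h))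
          omega
        · exact h
  have parg : ∀ n, (Even n → g (n+2) ≤ g (n+3)) ∧ (¬ Even n → g (n+3) ≤ g (n+2)) := by
    intro n
    have := par (n+2) (g (n+2)) (g (n+3)) (hadj (n+2)).2 (hg _) (hg _)
    simpa [Nat.even_add] using this
  refine ⟨fun x => g (G.dist x0 x + 2), ?_, ?_⟩
  · intro x y hxy
    dsimp only
    have h1 := hd1 x y (Or.inl hxy)
    have h2 := hd1 y x (Or.inr hxy)
    rcases (by omega : G.dist x0 y = G.dist x0 x ∨ G.dist x0 y = G.dist x0 x + 1 ∨
      G.dist x0 x = G.dist x0 y + 1) with h | h | h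
    · rw [h]
    · have p := par _ x y (Or.inl hxy) rfl h
      rw [h]
      by_cases he : Even (G.dist x0 x)
      · exact (parg _).1 he
      · have : x = y := le_antisymm hxy (p.2 he)
        subst this; omega
    · have p := par _ y x (Or.inr hxy) rfl h
      rw [h]
      by_cases he : Even (G.dist x0 y)
      · have : x = y := le_antisymm hxy (p.1 he)
        subst this; omega
      · exact (parg _).2 he
  · intro x hx
    have := hg (G.dist x0 x + 2)
    dsimp only at hx
    rw [hx] at this
    omega

/-- An infinite, locally finite T0 Alexandroff space does not have the fixed point
property: there is a continuous self-map without fixed points. -/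
theorem stmt1 {X : Type*} [TopologicalSpace X] [AlexandrovDiscrete X] [T0Space X]
    [Infinite X] (hlf : ∀ x : X, {y : X | specComp x y}.Finite) :
    ∃ f : X → X, Continuous f ∧ ∀ x, f x ≠ x := by
  let P : PartialOrder X :=
    { le := fun x y => x ⤳ y
      le_refl := fun x => specializes_rfl
      le_trans := fun x y z h1 h2 => h1.trans h2
      le_antisymm := fun x y h1 h2 => (h1.antisymm h2).eq }
  obtain ⟨f, hf, hne⟩ := @aux_poset X P _ (by
    intro x
    refine (hlf x).subset ?_
    rintro y (h | h)
    · exact Or.inl (specializes_iff_mem_closure.1 h)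
    · exact Or.inr (specializes_iff_mem_closure.1 h))
  refine ⟨f, ⟨fun s hs => ?_⟩, hne⟩
  rw [isOpen_iff_forall_specializes] at hs ⊢
  intro x y hxy hy
  exact hs _ _ (hf hxy) hy
end

section
/- Let X be an Alexandroff space and Y an arbitrary topological space. Two continuous maps f, g : X → Y are homotopic if and only if f and g belong to the same path component of the space C(X,Y) of continuous maps from X to Y equipped with the compact-open topology. -/
/-- For `X` an Alexandroff space and `Y` an arbitrary topological space, two continuous
maps `f g : X → Y` are homotopic iff they lie in the same path component of `C(X,Y)`
with the compact-open topology. -/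
theorem stmt2 {X Y : Type*} [TopologicalSpace X] [AlexandrovDiscrete X]
    [TopologicalSpace Y] (f g : C(X, Y)) :
    f.Homotopic g ↔ Joined f g := by
  constructor
  · rintro ⟨H⟩
    exact ⟨{ toContinuousMap := H.toContinuousMap.curry
             source' := by ext x; simp
             target' := by ext x; simp }⟩
  · rintro ⟨p⟩
    exact ⟨{ toContinuousMap := p.toContinuousMap.uncurry
             map_zero_left := fun x => by
              change p 0 x = f x
              rw [p.source]
             map_one_left := fun x => by
              change p 1 x = g x
              rw [p.target] }⟩
end

section
/- Let X be a topological space and Y a T0 Alexandroff space. For any continuous map f : X → Y, the intersection of all open subsets of C(X,Y) containing f equals the set {g ∈ C(X,Y) : g(x) ≤ f(x) for all x ∈ X}, where ≤ is the specialization order on Y. -/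
/-- For `X` a topological space and `Y` a T0 Alexandroff space, the intersection of all
open subsets of `C(X,Y)` (compact-open topology) containing `f` is
`{g : g(x) ≤ f(x) for all x}`. -/
theorem stmt3 {X Y : Type*} [TopologicalSpace X] [TopologicalSpace Y]
    [AlexandrovDiscrete Y] [T0Space Y] (f : C(X, Y)) :
    ⋂₀ {U : Set C(X, Y) | IsOpen U ∧ f ∈ U} = {g : C(X, Y) | ∀ x, specLE (g x) (f x)} := by
  ext g
  have h1 : g ∈ ⋂₀ {U : Set C(X, Y) | IsOpen U ∧ f ∈ U} ↔ g ⤳ f := by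
    rw [specializes_iff_forall_open]
    simp only [Set.mem_sInter, Set.mem_setOf_eq, and_imp]
  rw [h1, ← ContinuousMap.specializes_coe, specializes_pi]
  simp only [Set.mem_setOf_eq, specLE, specializes_iff_mem_closure]
end

section
/- A T0 Alexandroff space X is compact if and only if the set max(X) of maximal elements of X (with respect to the specialization order) is finite and for every x ∈ X there exists y ∈ max(X) with x ≤ y. -/
/-- A T0 Alexandroff space is compact iff the set of its maximal elements (for the
specialization order) is finite and every point lies below some maximal element. -/
theorem stmt4 {X : Type*} [TopologicalSpace X] [AlexandrovDiscrete X] [T0Space X] :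
    CompactSpace X ↔
      ({x : X | ∀ y, specLE x y → y = x}.Finite ∧
        ∀ x : X, ∃ y, (∀ z, specLE y z → z = y) ∧ specLE x y) := by
  constructor
  · intro h
    constructor
    · obtain ⟨t, ht⟩ := (isCompact_univ (X := X)).elim_finite_subcover
        (fun x : X => nhdsKer {x}) (fun _ => isOpen_nhdsKer)
        (fun x _ => Set.mem_iUnion.2 ⟨x, subset_nhdsKer rfl⟩)
      refine t.finite_toSet.subset fun x hx => ?_
      obtain ⟨y, hy, hxy⟩ := Set.mem_iUnion₂.1 (ht (Set.mem_univ x))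
      have h1 : y = x := hx y (specializes_iff_mem_closure.1 (mem_nhdsKer_singleton.1 hxy))
      exact h1 ▸ hy
    · intro x
      obtain ⟨y, hy, hc⟩ := IsClosed.exists_closed_singleton
        (isClosed_closure (s := ({x} : Set X))) ⟨x, subset_closure rfl⟩
      refine ⟨y, fun z hz => ?_, hy⟩
      unfold specLE at hz
      rw [hc.closure_eq] at hz
      exact hz
  · rintro ⟨hf, hm⟩
    refine ⟨isCompact_of_finite_subcover fun {ι} U hU hc => ?_⟩
    obtain ⟨t, ht⟩ := hf.isCompact.elim_finite_subcover U hU ((Set.subset_univ _).trans hc)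
    refine ⟨t, fun x _ => ?_⟩
    obtain ⟨y, hy, hxy⟩ := hm x
    obtain ⟨i, hi, hyi⟩ := Set.mem_iUnion₂.1 (ht hy)
    exact Set.mem_iUnion₂.2 ⟨i, hi, (specializes_iff_mem_closure.2 hxy).mem_open (hU i) hyi⟩
end

section
/- Let X and Y be T0 Alexandroff spaces, let K ⊆ X be compact and U ⊆ Y be open. Then {f ∈ C(X,Y) : f(K) ⊆ U} = {f ∈ C(X,Y) : f(max(K)) ⊆ U}, where max(K) is the set of elements of K that are maximal in K with respect to the specialization order on X. -/
/-- For T0 Alexandroff spaces `X`, `Y`, a compact `K ⊆ X` and an open `U ⊆ Y`,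
`[K,U] = [max K, U]` in `C(X,Y)`. -/
theorem stmt5 {X Y : Type*} [TopologicalSpace X] [AlexandrovDiscrete X] [T0Space X]
    [TopologicalSpace Y] [AlexandrovDiscrete Y] [T0Space Y]
    {K : Set X} (hK : IsCompact K) {U : Set Y} (hU : IsOpen U) :
    {f : C(X, Y) | f '' K ⊆ U} =
      {f : C(X, Y) | f '' {x | x ∈ K ∧ ∀ y ∈ K, specLE x y → y = x} ⊆ U} := by
  ext f
  simp only [Set.mem_setOf_eq]
  constructor
  · rintro h _ ⟨x, hx, rfl⟩
    exact h ⟨x, hx.1, rfl⟩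
  · rintro h _ ⟨x, hx, rfl⟩
    obtain ⟨F, hFK, hF⟩ := hK.elim_nhds_subcover (fun x => nhdsKer {x})
      (fun x _ => isOpen_nhdsKer.mem_nhds (subset_nhdsKer rfl))
    have hF' : ∀ y ∈ K, ∃ t ∈ F, y ⤳ t := by
      intro y hy
      have := hF hy
      simp only [Set.mem_iUnion, mem_nhdsKer_singleton, exists_prop] at this
      exact this
    letI := specializationOrder X
    have hfin : {t | t ∈ F ∧ x ⤳ t}.Finite := F.finite_toSet.subset fun t ht => ht.1
    obtain ⟨m, hm⟩ := hfin.exists_minimal (hF' x hx)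
    have hxm : x ⤳ m := hm.prop.2
    refine (hxm.map f.continuous).mem_open hU (h ⟨m, ⟨hFK m hm.prop.1, ?_⟩, rfl⟩)
    intro y hy hmy
    have hmy : m ⤳ y := specializes_iff_mem_closure.2 hmy
    obtain ⟨t, ht, hyt⟩ := hF' y hy
    have htm : t ⤳ m := hm.le_of_le ⟨ht, (hxm.trans hmy).trans hyt⟩ (hmy.trans hyt)
    exact ((hyt.trans htm).antisymm hmy).eq
end

section
/- Let X and Y be T0 Alexandroff spaces. The family of sets [x, ↓y] = {f ∈ C(X,Y) : f(x) ≤ y}, for x ∈ X and y ∈ Y, is a subbasis for the compact-open topology on C(X,Y); consequently, the compact-open topology on C(X,Y) coincides with the topology of pointwise convergence, i.e. the subspace topology induced from the product space ∏_{x∈X} Y. -/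
/-- For T0 Alexandroff spaces `X`, `Y`, the sets `[x, ↓y] = {f : f x ≤ y}` form a
subbasis for the compact-open topology on `C(X,Y)`; hence the compact-open topology
coincides with the topology of pointwise convergence (induced from `∏_{x∈X} Y`). -/
theorem stmt6 {X Y : Type*} [TopologicalSpace X] [AlexandrovDiscrete X] [T0Space X]
    [TopologicalSpace Y] [AlexandrovDiscrete Y] [T0Space Y] :
    (ContinuousMap.compactOpen : TopologicalSpace C(X, Y)) =
        TopologicalSpace.generateFrom
          {S : Set C(X, Y) | ∃ (x : X) (y : Y), S = {f : C(X, Y) | specLE (f x) y}} ∧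
      (ContinuousMap.compactOpen : TopologicalSpace C(X, Y)) =
        TopologicalSpace.induced (fun (f : C(X, Y)) (x : X) => f x) Pi.topologicalSpace := by
  have hop : ∀ y : Y, IsOpen {z : Y | specLE z y} := by
    intro y
    rw [isOpen_iff_forall_specializes]
    intro a b hab hb
    exact specializes_iff_mem_closure.1 (hab.trans (specializes_iff_mem_closure.2 hb))
  have h1 : (ContinuousMap.compactOpen : TopologicalSpace C(X, Y)) ≤
      TopologicalSpace.induced (fun (f : C(X, Y)) (x : X) => f x) Pi.topologicalSpace := by
    rw [← continuous_iff_le_induced]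
    exact continuous_pi fun x => continuous_eval_const x
  have h2 : TopologicalSpace.induced (fun (f : C(X, Y)) (x : X) => f x) Pi.topologicalSpace ≤
      TopologicalSpace.generateFrom
          {S : Set C(X, Y) | ∃ (x : X) (y : Y), S = {f : C(X, Y) | specLE (f x) y}} := by
    apply le_generateFrom
    rintro S ⟨x, y, rfl⟩
    rw [isOpen_induced_iff]
    exact ⟨(fun p : X → Y => p x) ⁻¹' {z | specLE z y}, (hop y).preimage (continuous_apply x), rfl⟩
  have h3 : TopologicalSpace.generateFrom
          {S : Set C(X, Y) | ∃ (x : X) (y : Y), S = {f : C(X, Y) | specLE (f x) y}} ≤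
      (ContinuousMap.compactOpen : TopologicalSpace C(X, Y)) := by
    rw [ContinuousMap.compactOpen_eq]
    apply le_generateFrom
    rintro S ⟨K, hK, U, hU, rfl⟩
    have hK' : IsCompact K := hK
    have hU' : IsOpen U := hU
    obtain ⟨t, htK, ht⟩ := hK'.elim_nhds_subcover (fun x => {z | z ⤳ x}) (by
      intro x _
      refine IsOpen.mem_nhds ?_ (specializes_rfl : x ⤳ x)
      rw [isOpen_iff_forall_specializes]
      intro a b hab hb
      exact hab.trans hb)
    letI T : TopologicalSpace C(X, Y) := TopologicalSpace.generateFrom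
          {S : Set C(X, Y) | ∃ (x : X) (y : Y), S = {f : C(X, Y) | specLE (f x) y}}
    refine (@isOpen_iff_forall_mem_open _ T _).2 fun f hf => ?_
    refine ⟨⋂ x ∈ t, {g : C(X, Y) | specLE (g x) (f x)}, ?_, ?_, ?_⟩
    · intro g hg z hz
      obtain ⟨x, hx, hzx⟩ := Set.mem_iUnion₂.1 (ht hz)
      have hgx : g x ⤳ f x := specializes_iff_mem_closure.2 (Set.mem_iInter₂.1 hg x hx)
      have hzx' : z ⤳ x := hzx
      exact ((hzx'.map g.continuous).trans hgx).mem_open hU' (hf (htK x hx))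
    · exact @isOpen_biInter_finset _ _ T _ _ fun x _ =>
        TopologicalSpace.isOpen_generateFrom_of_mem ⟨x, f x, rfl⟩
    · exact Set.mem_iInter₂.2 fun x _ => subset_closure rfl
  exact ⟨le_antisymm (h1.trans h2) h3, le_antisymm h1 (h2.trans h3)⟩
end

section
/- A T0 Alexandroff space X is hereditarily compact (every subspace of X is compact) if and only if X contains no infinite antichain with respect to the specialization order and X satisfies the ascending chain condition (X contains no strictly increasing infinite sequence). -/
theorem specLE_iff_aux {X : Type*} [TopologicalSpace X] (x y : X) : specLE x y ↔ x ⤳ y :=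
  specializes_iff_mem_closure.symm

/-- A T0 Alexandroff space is hereditarily compact iff it has no infinite antichains and
contains no strictly increasing infinite sequence (ACC). -/
theorem stmt7 {X : Type*} [TopologicalSpace X] [AlexandrovDiscrete X] [T0Space X] :
    (∀ S : Set X, IsCompact S) ↔
      ((∀ A : Set X, (∀ x ∈ A, ∀ y ∈ A, x ≠ y → ¬ specComp x y) → A.Finite) ∧
        ¬ ∃ c : ℕ → X, ∀ n, specLE (c n) (c (n + 1)) ∧ c n ≠ c (n + 1)) := by
  simp only [specComp, specLE_iff_aux]
  have key : ∀ a x : X, x ∈ nhdsKer ({a} : Set X) ↔ x ⤳ a := by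
    intro a x
    rw [mem_nhdsKer_singleton]
  constructor
  · intro h
    constructor
    · intro A hA
      obtain ⟨t, ht⟩ := (h A).elim_finite_subcover (fun a : A => nhdsKer {(a : X)})
        (fun a => isOpen_nhdsKer)
        (fun x hx => Set.mem_iUnion.2 ⟨⟨x, hx⟩, (key _ _).2 specializes_rfl⟩)
      refine ((t.finite_toSet).image Subtype.val).subset ?_
      intro x hx
      obtain ⟨a, ha, hxa⟩ := Set.mem_iUnion₂.1 (ht hx)
      refine ⟨a, ha, ?_⟩
      by_contra hne
      exact hA x hx a a.2 (fun e => hne e.symm) (Or.inl ((key _ _).1 hxa))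
    · rintro ⟨c, hc⟩
      have mono : ∀ m n, m ≤ n → c m ⤳ c n := by
        intro m n hmn
        induction hmn with
        | refl => exact specializes_rfl
        | step _ ih => exact ih.trans (hc _).1
      obtain ⟨t, ht⟩ := (h (Set.range c)).elim_finite_subcover (fun n : ℕ => nhdsKer {c n})
        (fun a => isOpen_nhdsKer)
        (by
          rintro _ ⟨n, rfl⟩
          exact Set.mem_iUnion.2 ⟨n, (key _ _).2 specializes_rfl⟩)
      obtain ⟨N, hN⟩ := t.bddAbove
      obtain ⟨a, ha, hxa⟩ := Set.mem_iUnion₂.1 (ht ⟨N + 1, rfl⟩)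
      have h1 : c (N + 1) ⤳ c N := ((key _ _).1 hxa).trans (mono _ _ (hN ha))
      exact (hc N).2 ((hc N).1.antisymm h1).eq
  · rintro ⟨hA, hc⟩ S
    have wf : WellFounded (fun y x : X => x ⤳ y ∧ x ≠ y) := by
      rw [wellFounded_iff_isEmpty_descending_chain]
      exact ⟨fun f => hc ⟨f.1, f.2⟩⟩
    let M : Set X := {m | m ∈ S ∧ ∀ y ∈ S, m ⤳ y → m = y}
    have hM : M.Finite := by
      apply hA
      rintro x hx y hy hne (h | h)
      · exact hne (hx.2 y hy.1 h)
      · exact hne (hy.2 x hx.1 h).symm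
    have hS : ∀ x ∈ S, ∃ m ∈ M, x ⤳ m := by
      intro x hx
      obtain ⟨m, ⟨hm, hxm⟩, hmin⟩ := wf.has_min {y | y ∈ S ∧ x ⤳ y} ⟨x, hx, specializes_rfl⟩
      refine ⟨m, ⟨hm, fun y hy hmy => ?_⟩, hxm⟩
      by_contra hne
      exact hmin y ⟨hy, hxm.trans hmy⟩ ⟨hmy, hne⟩
    refine isCompact_of_finite_subcover fun U hU hSU => ?_
    obtain ⟨t, ht⟩ := hM.isCompact.elim_finite_subcover U hU (fun x hx => hSU hx.1)
    refine ⟨t, fun x hx => ?_⟩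
    obtain ⟨m, hm, hxm⟩ := hS x hx
    obtain ⟨i, hi, hmi⟩ := Set.mem_iUnion₂.1 (ht hm)
    exact Set.mem_iUnion₂.2 ⟨i, hi, hxm.mem_open (hU i) hmi⟩
end

section
/- Let X be an infinite T0 Alexandroff space and Y a discrete space with at least two points. Then C(X,Y) with the compact-open topology is an Alexandroff space if and only if X has finitely many connected components. -/
open Topology Filter in
theorem aux_open {X : Type*} [TopologicalSpace X] [AlexandrovDiscrete X] (x : X) :
    IsOpen (connectedComponent x) := by
  rw [isOpen_iff_mem_nhds]
  intro y hy
  have h1 : IsPreconnected (nhdsKer ({y} : Set X)) := by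
    apply isPreconnected_of_forall y
    intro z hz
    refine ⟨{y, z}, ?_, by simp, by simp, ?_⟩
    · rintro w (rfl | rfl)
      · exact subset_nhdsKer rfl
      · exact hz
    · have hs : z ⤳ y := by
        rw [mem_nhdsKer_singleton] at hz
        exact hz
      have : IsPreconnected ({z} : Set X) := isPreconnected_singleton
      refine this.subset_closure (by simp) ?_
      rintro w (rfl | rfl)
      · exact hs.mem_closure
      · exact subset_closure rfl
  have h2 : nhdsKer ({y} : Set X) ⊆ connectedComponent x := by
    rw [connectedComponent_eq hy]
    exact h1.subset_connectedComponent (subset_nhdsKer rfl)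
  exact nhdsKer_singleton_subset_iff_mem_nhds.1 h2

theorem aux_disc {X : Type*} [TopologicalSpace X] [AlexandrovDiscrete X] :
    DiscreteTopology (ConnectedComponents X) := by
  rw [discreteTopology_iff_isOpen_singleton]
  intro c
  obtain ⟨x, rfl⟩ := ConnectedComponents.surjective_coe c
  rw [← ConnectedComponents.isQuotientMap_coe.isOpen_preimage,
    connectedComponents_preimage_singleton]
  exact aux_open x

/-- For `X` an infinite T0 Alexandroff space and `Y` a discrete space with at least two
points, `C(X,Y)` with the compact-open topology is Alexandroff iff `X` has finitely
many connected components. -/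
theorem stmt8 {X Y : Type*} [TopologicalSpace X] [AlexandrovDiscrete X] [T0Space X]
    [Infinite X] [TopologicalSpace Y] [DiscreteTopology Y] [Nontrivial Y] :
    AlexandrovDiscrete C(X, Y) ↔ Finite (ConnectedComponents X) := by
  classical
  have hD : DiscreteTopology (ConnectedComponents X) := aux_disc
  constructor
  · intro hA
    obtain ⟨a, b, hab⟩ := exists_pair_ne Y
    have hopen : IsOpen ({ContinuousMap.const X a} : Set C(X, Y)) := by
      have := isOpen_iInter₂ (f := fun (g : C(X, Y)) (_ : g ≠ ContinuousMap.const X a) => {g}ᶜ)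
        (fun g _ => isOpen_compl_singleton)
      convert this using 1
      ext g
      simp
      grind
    let g : Finset (ConnectedComponents X) → C(X, Y) := fun F =>
      ⟨fun x => if (x : ConnectedComponents X) ∈ F then a else b,
        (continuous_of_discreteTopology (f := fun c : ConnectedComponents X =>
          if c ∈ F then a else b)).comp ConnectedComponents.continuous_coe⟩
    have ht : Filter.Tendsto g Filter.atTop (nhds (ContinuousMap.const X a)) := by
      rw [ContinuousMap.tendsto_nhds_compactOpen]
      intro K hK U hU hm
      have hfin : ((fun x : X => (x : ConnectedComponents X)) '' K).Finite :=
        (hK.image ConnectedComponents.continuous_coe).finite_of_discrete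
      filter_upwards [Filter.eventually_ge_atTop hfin.toFinset] with F hF x hx
      have : (x : ConnectedComponents X) ∈ F := hF (by simpa using ⟨x, hx, rfl⟩)
      have h2 : g F x = a := if_pos this
      rw [h2]
      exact hm hx
    obtain ⟨F, hF⟩ := (ht.eventually (hopen.mem_nhds rfl)).exists
    refine Set.finite_univ_iff.1 (F.finite_toSet.subset ?_)
    intro c _
    obtain ⟨x, rfl⟩ := ConnectedComponents.surjective_coe c
    by_contra hc
    have h1 : g F x = a := by rw [Set.mem_singleton_iff.1 hF]; rfl
    have h2 : g F x = b := if_neg hc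
    exact hab (h1.symm.trans h2)
  · intro hfin
    have : DiscreteTopology C(X, Y) := by
      rw [discreteTopology_iff_isOpen_singleton]
      intro f
      choose r hr using ConnectedComponents.surjective_coe (α := X)
      have h : ({f} : Set C(X, Y)) = ⋂ c, (fun g : C(X, Y) => g (r c)) ⁻¹' {f (r c)} := by
        ext g
        simp only [Set.mem_singleton_iff, Set.mem_iInter, Set.mem_preimage]
        refine ⟨fun h c => by rw [h], fun h => ?_⟩
        ext x
        have key : ∀ k : C(X, Y), k x = k (r x) := fun k =>
          isPreconnected_connectedComponent.constant (x := x) k.continuous.continuousOn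
            mem_connectedComponent (by
              have := hr x
              rw [ConnectedComponents.coe_eq_coe'] at this
              exact this)
        rw [key g, key f, h]
      rw [h]
      exact isOpen_iInter_of_finite fun c =>
        (isOpen_discrete _).preimage (continuous_eval_const _)
    infer_instance
end

section
/- Let X be an infinite T0 Alexandroff space and Y a T0 Alexandroff space with at least two points that is not discrete. Then C(X,Y) with the compact-open topology is an Alexandroff space if and only if X is hereditarily compact and every continuous map f : X → Y has finite image f(X). -/
open Set TopologicalSpace Topology

lemma aux_retract {Z : Type*} [TopologicalSpace Z] [AlexandrovDiscrete Z] [NoetherianSpace Z]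
    (𝒰 : Set (Set Z)) (h𝒰 : 𝒰.Finite) (h𝒰o : ∀ U ∈ 𝒰, IsOpen U) (C : Closeds Z) :
    ∀ (𝓔 : Set (Set Z)), 𝓔.Finite → (∀ E ∈ 𝓔, IsClosed E) →
      ∃ h : Z → Z, (∀ x ∈ C, ∀ y ∈ C, x ⤳ y → h x ⤳ h y) ∧ (h '' (C : Set Z)).Finite ∧
        (∀ E ∈ 𝓔, ∀ x ∈ C, x ∈ E → h x ∈ E) ∧ (∀ U ∈ 𝒰, ∀ x ∈ C, x ∈ U → h x ∈ U) := by
  classical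
  induction C using WellFoundedLT.induction with
  | ind C ih =>
  intro 𝓔 h𝓔 h𝓔c
  obtain ⟨S, hSf, hSc, hSi, hCS⟩ :=
    NoetherianSpace.exists_finite_set_isClosed_irreducible C.isClosed
  rcases S.eq_empty_or_nonempty with rfl | hne
  · have hC : ∀ x, x ∉ C := by
      intro x hx
      have : x ∈ (C : Set Z) := hx
      rw [hCS] at this
      simp at this
    refine ⟨id, fun x hx => (hC x hx).elim, ?_, fun _ _ x hx => (hC x hx).elim,
      fun _ _ x hx => (hC x hx).elim⟩
    rw [hCS]; simp
  obtain ⟨D, hDm⟩ := hSf.exists_maximal hne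
  have hDS : D ∈ S := hDm.prop
  have hDi := hSi D hDS
  have hDc := hSc D hDS
  have hDC : D ⊆ C := by rw [hCS]; exact subset_sUnion_of_mem hDS
  let bad : Set (Set Z) := {E | E ∈ S ∪ 𝓔 ∧ ¬ D ⊆ E}
  have hbf : bad.Finite := (hSf.union h𝓔).subset fun E hE => hE.1
  have hbc : ∀ E ∈ bad, IsClosed E := by
    rintro E ⟨hE | hE, -⟩
    · exact hSc E hE
    · exact h𝓔c E hE
  have hbu : IsClosed (⋃₀ bad) := isClosed_sUnion hbc
  let C' : Closeds Z := C ⊓ ⟨⋃₀ bad, hbu⟩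
  have hmem : ∀ x, x ∈ C' ↔ x ∈ C ∧ x ∈ ⋃₀ bad := fun x => Iff.rfl
  have hDnot : ¬ D ⊆ ⋃₀ bad := by
    intro hsub
    obtain ⟨E, hE, hDE⟩ := isIrreducible_iff_sUnion_isClosed.1 hDi hbf.toFinset
      (by simpa using hbc) (by simpa using hsub)
    exact ((hbf.mem_toFinset.1 hE).2) hDE
  have hlt : C' < C := by
    refine lt_of_le_of_ne inf_le_left fun heq => hDnot fun x hx => ?_
    have : x ∈ C' := by rw [heq]; exact hDC hx
    exact ((hmem x).1 this).2
  have hCD : ∀ x ∈ C, x ∉ C' → x ∈ D := by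
    intro x hx hx'
    have h1 : x ∈ (C : Set Z) := hx
    rw [hCS] at h1
    obtain ⟨E, hE, hxE⟩ := h1
    by_cases hDE : D ⊆ E
    · exact hDm.le_of_ge hE hDE hxE
    · exact (hx' ((hmem x).2 ⟨hx, E, ⟨Or.inl hE, hDE⟩, hxE⟩)).elim
  obtain ⟨h, hmono, hfin, hE, hU⟩ := ih C' hlt (insert D 𝓔) (h𝓔.insert D) (by
    rintro E (rfl | hE)
    · exact hDc
    · exact h𝓔c E hE)
  let O : Set (Set Z) := {U | U ∈ 𝒰 ∧ (D ∩ U).Nonempty} ∪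
    (fun w => nhdsKer {w}) '' (h '' ((C' : Set Z) ∩ D))
  have hOf : O.Finite := (h𝒰.subset fun U hU => hU.1).union
    ((hfin.subset (image_mono inter_subset_left)).image _)
  obtain ⟨q, hqD, hq⟩ := isIrreducible_iff_sInter.1 hDi hOf.toFinset (by
      intro U hU
      rcases hOf.mem_toFinset.1 hU with hU | ⟨w, -, rfl⟩
      · exact h𝒰o U hU.1
      · exact isOpen_nhdsKer) (by
      intro U hU
      rcases hOf.mem_toFinset.1 hU with hU | ⟨w, ⟨x, hx, rfl⟩, rfl⟩
      · exact hU.2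
      · exact ⟨h x, hE D (mem_insert _ _) x hx.1 hx.2, subset_nhdsKer rfl⟩)
  have hqO : ∀ U ∈ O, q ∈ U := fun U hU => hq U (by simpa using hU)
  refine ⟨fun x => if x ∈ C' then h x else q, ?_, ?_, ?_, ?_⟩
  · intro x hx y hy hxy
    by_cases hx' : x ∈ C'
    · have hy' : y ∈ C' := hxy.mem_closed C'.isClosed hx'
      simpa [hx', hy'] using hmono x hx' y hy' hxy
    · by_cases hy' : y ∈ C'
      · have hyD : y ∈ D := hxy.mem_closed hDc (hCD x hx hx')
        have := hqO _ (Or.inr ⟨h y, ⟨y, ⟨hy', hyD⟩, rfl⟩, rfl⟩)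
        simp only [hx', hy', if_true, if_false]
        simpa using this
      · simp [hx', hy', specializes_rfl]
  · refine (hfin.insert q).subset ?_
    rintro _ ⟨x, hx, rfl⟩
    by_cases hx' : x ∈ C'
    · simp only [hx', if_true]; exact Or.inr ⟨x, hx', rfl⟩
    · simp [hx']
  · intro E hE' x hx hxE
    by_cases hx' : x ∈ C'
    · simp only [hx', if_true]; exact hE E (mem_insert_of_mem _ hE') x hx' hxE
    · simp only [hx', if_false]
      by_cases hDE : D ⊆ E
      · exact hDE hqD
      · exact (hx' ((hmem x).2 ⟨hx, E, ⟨Or.inr hE', hDE⟩, hxE⟩)).elim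
  · intro U hU' x hx hxU
    by_cases hx' : x ∈ C'
    · simp only [hx', if_true]; exact hU U hU' x hx' hxU
    · simp only [hx', if_false]
      exact hqO U (Or.inl ⟨hU', x, hCD x hx hx', hxU⟩)

lemma aux_irred {Z : Type*} [TopologicalSpace Z] [AlexandrovDiscrete Z] [NoetherianSpace Z]
    [T0Space Z] [Infinite Z] :
    ∃ I : Set Z, IsClosed I ∧ IsIrreducible I ∧ ∀ m ∈ I, ¬ I ⊆ closure {m} := by
  obtain ⟨I, hI, hmin⟩ := (wellFounded_lt (α := Closeds Z)).has_min
    {C | (C : Set Z).Infinite} ⟨⊤, by simpa using infinite_univ⟩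
  have key : ∀ U : Set Z, IsOpen U → ((I : Set Z) ∩ U).Nonempty → ((I : Set Z) \ U).Finite := by
    rintro U hU ⟨x, hxI, hxU⟩
    by_contra hinf
    refine hmin ⟨(I : Set Z) \ U, I.isClosed.sdiff hU⟩ hinf (lt_of_le_of_ne ?_ ?_)
    · exact fun y hy => hy.1
    · intro heq
      have : x ∈ (⟨(I : Set Z) \ U, I.isClosed.sdiff hU⟩ : Closeds Z) := by rw [heq]; exact hxI
      exact this.2 hxU
  refine ⟨I, I.isClosed, ⟨hI.nonempty, ?_⟩, ?_⟩
  · intro U V hU hV hIU hIV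
    by_contra hne
    refine hI (((key U hU hIU).union (key V hV hIV)).subset fun x hx => ?_)
    by_cases hxU : x ∈ U
    · exact Or.inr ⟨hx, fun hxV => hne ⟨x, hx, hxU, hxV⟩⟩
    · exact Or.inl ⟨hx, hxU⟩
  · intro m hm hsub
    have := key (nhdsKer {m}) isOpen_nhdsKer ⟨m, hm, subset_nhdsKer rfl⟩
    refine hI ((this.insert m).subset fun x hx => ?_)
    by_cases hxm : x ∈ nhdsKer {m}
    · left
      have h1 : x ⤳ m := by simpa using hxm
      have h2 : m ⤳ x := specializes_iff_mem_closure.2 (hsub hx)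
      exact (h1.antisymm h2).eq
    · exact Or.inr ⟨hx, hxm⟩

lemma aux_cont {X Y : Type*} [TopologicalSpace X] [AlexandrovDiscrete X] [TopologicalSpace Y]
    {h : X → Y} (hh : ∀ x y, x ⤳ y → h x ⤳ h y) : Continuous h :=
  ⟨fun _ hU => isOpen_iff_forall_specializes.2 fun x y hxy hy => (hh x y hxy).mem_open hU hy⟩

lemma aux_map {Z : Type*} [TopologicalSpace Z] [AlexandrovDiscrete Z] [NoetherianSpace Z]
    [T0Space Z] [Infinite Z] (𝒰 : Set (Set Z)) (h𝒰 : 𝒰.Finite) (h𝒰o : ∀ U ∈ 𝒰, IsOpen U) :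
    ∃ h : Z → Z, Continuous h ∧ (∀ U ∈ 𝒰, ∀ x ∈ U, h x ∈ U) ∧ ∃ z, ¬ h z ⤳ z := by
  obtain ⟨I, hIc, hIi, hI⟩ := aux_irred (Z := Z)
  obtain ⟨h, hmono, hfin, hE, hU⟩ := aux_retract 𝒰 h𝒰 h𝒰o ⊤ {I} (finite_singleton I)
    (by simpa using hIc)
  refine ⟨h, aux_cont fun x y => hmono x trivial y trivial, fun U hU' x => hU U hU' x trivial, ?_⟩
  by_contra! hcon
  have hf : ((fun w => closure {w}) '' (h '' I)).Finite :=
    (hfin.subset (image_mono fun x _ => trivial)).image _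
  obtain ⟨T, hT, hIT⟩ := isIrreducible_iff_sUnion_isClosed.1 hIi hf.toFinset (by
      intro T hT
      obtain ⟨w, -, rfl⟩ := hf.mem_toFinset.1 hT
      exact isClosed_closure) (by
      intro x hx
      refine ⟨closure {h x}, by simpa using ⟨x, hx, rfl⟩, ?_⟩
      exact specializes_iff_mem_closure.1 (hcon x))
  obtain ⟨w, ⟨x, hx, rfl⟩, rfl⟩ := hf.mem_toFinset.1 hT
  exact hI (h x) (hE I rfl x trivial hx) hIT

lemma aux_basic {X Y : Type*} [TopologicalSpace X] [TopologicalSpace Y] [AlexandrovDiscrete Y]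
    [AlexandrovDiscrete C(X, Y)] (f : C(X, Y)) :
    ∃ t : Set (Set X × Set Y), t.Finite ∧
      (∀ p ∈ t, IsCompact p.1 ∧ IsOpen p.2 ∧ MapsTo f p.1 p.2) ∧
      ∀ g : C(X, Y), (∀ p ∈ t, MapsTo g p.1 p.2) → ∀ x, g x ⤳ f x := by
  have hV : IsOpen (⋂ x : X, {g : C(X, Y) | MapsTo g {x} (nhdsKer {f x})}) :=
    isOpen_iInter fun x =>
      ContinuousMap.isOpen_setOfPred_mapsTo isCompact_singleton isOpen_nhdsKer
  have hfV : f ∈ (⋂ x : X, {g : C(X, Y) | MapsTo g {x} (nhdsKer {f x})}) := by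
    refine mem_iInter.2 fun x y hy => ?_
    rw [mem_singleton_iff.1 hy]
    exact subset_nhdsKer rfl
  obtain ⟨_, ⟨s, ⟨hsf, hs⟩, rfl⟩, hfs, hsV⟩ :=
    (isTopologicalBasis_of_subbasis (ContinuousMap.compactOpen_eq (X := X) (Y := Y))).exists_subset_of_mem_open
      hfV hV
  have hs' : ∀ T ∈ s, ∃ p : Set X × Set Y, IsCompact p.1 ∧ IsOpen p.2 ∧
      {g : C(X, Y) | MapsTo g p.1 p.2} = T := by
    intro T hT
    obtain ⟨K, hK, U, hU, rfl⟩ := hs hT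
    exact ⟨(K, U), hK, hU, rfl⟩
  choose! φ hφ using hs'
  refine ⟨φ '' s, hsf.image φ, ?_, ?_⟩
  · rintro _ ⟨T, hT, rfl⟩
    refine ⟨(hφ T hT).1, (hφ T hT).2.1, ?_⟩
    have := hfs T hT
    rw [← (hφ T hT).2.2] at this
    exact this
  · intro g hg x
    have hgs : g ∈ ⋂₀ s := by
      intro T hT
      rw [← (hφ T hT).2.2]
      exact hg _ ⟨T, hT, rfl⟩
    have := mem_iInter.1 (hsV hgs) x (mem_singleton x)
    simpa using this

lemma aux_noeth {X Y : Type*} [TopologicalSpace X] [TopologicalSpace Y]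
    [AlexandrovDiscrete Y] [T0Space Y] (hY : ¬ DiscreteTopology Y)
    [AlexandrovDiscrete C(X, Y)] : NoetherianSpace X := by
  classical
  obtain ⟨a, b, hab, hne⟩ : ∃ a b : Y, a ⤳ b ∧ a ≠ b := by
    by_contra! hcon
    have : T1Space Y := t1Space_iff_specializes_imp_eq.2 fun {x y} h => hcon x y h
    exact hY inferInstance
  have hba : ¬ b ⤳ a := fun h => hne (hab.antisymm h).eq
  have hc : ∀ D : Set X, IsOpen D → Continuous (fun x => if x ∈ D then a else b) := by
    intro D hD
    refine ⟨fun W hW => ?_⟩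
    by_cases hb : b ∈ W
    · have ha : a ∈ W := hab.mem_open hW hb
      convert isOpen_univ
      ext x
      by_cases hx : x ∈ D <;> simp [hx, ha, hb]
    · by_cases ha : a ∈ W
      · convert hD
        ext x
        by_cases hx : x ∈ D <;> simp [hx, ha, hb]
      · convert isOpen_empty
        ext x
        by_cases hx : x ∈ D <;> simp [hx, ha, hb]
  rw [noetherianSpace_iff_opens]
  intro D
  obtain ⟨t, htf, ht, hmax⟩ := aux_basic (⟨_, hc D D.isOpen⟩ : C(X, Y))
  let t' := {p ∈ t | b ∉ p.2}
  let K : Set X := ⋃ p ∈ t', p.1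
  have hK : IsCompact K := (htf.subset (fun p hp => hp.1)).isCompact_biUnion
    fun p hp => (ht p hp.1).1
  have hKD : K ⊆ D := by
    intro x hx
    obtain ⟨p, hp, hxp⟩ := mem_iUnion₂.1 hx
    have := (ht p hp.1).2.2 hxp
    by_contra hxD
    have hxD' : x ∉ D := hxD
    simp [hxD'] at this
    exact hp.2 this
  have hDU : ∀ U : Set X, IsOpen U → K ⊆ U → (D : Set X) ⊆ U := by
    intro U hU hKU x hxD
    by_contra hxU
    have := hmax ⟨_, hc U hU⟩ (by
      intro p hp y hy
      by_cases hb : b ∈ p.2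
      · have ha : a ∈ p.2 := hab.mem_open (ht p hp).2.1 hb
        by_cases hyU : y ∈ U <;> simp [hyU, ha, hb]
      · have hyK : y ∈ K := mem_iUnion₂.2 ⟨p, ⟨hp, hb⟩, hy⟩
        have h1 := (ht p hp).2.2 hy
        have h2 : y ∈ D := hKD hyK
        have h3 := hKU hyK
        simpa [h2, h3] using h1) x
    have hxD' : x ∈ D := hxD
    simp [hxU, hxD'] at this
    exact hba this
  refine isCompact_of_finite_subcover fun {ι} U hU hDc => ?_
  obtain ⟨s, hs⟩ := hK.elim_finite_subcover U hU (hKD.trans hDc)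
  exact ⟨s, hDU _ (isOpen_biUnion fun i _ => hU i) hs⟩

/-- For `X` an infinite T0 Alexandroff space and `Y` a non-discrete T0 Alexandroff space
with at least two points, `C(X,Y)` with the compact-open topology is Alexandroff iff
`X` is hereditarily compact and every continuous `f : X → Y` has finite image. -/
theorem stmt9 {X Y : Type*} [TopologicalSpace X] [AlexandrovDiscrete X] [T0Space X]
    [Infinite X] [TopologicalSpace Y] [AlexandrovDiscrete Y] [T0Space Y] [Nontrivial Y]
    (hY : ¬ DiscreteTopology Y) :
    AlexandrovDiscrete C(X, Y) ↔
      ((∀ S : Set X, IsCompact S) ∧ ∀ f : C(X, Y), (Set.range f).Finite) := by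
  constructor
  · intro hA
    have hN : NoetherianSpace X := aux_noeth hY
    refine ⟨fun S => NoetherianSpace.isCompact S, fun f => ?_⟩
    by_contra hinf
    have : Infinite (Set.range f) := Set.infinite_coe_iff.2 hinf
    have : NoetherianSpace (Set.range f) := NoetherianSpace.range f f.continuous
    have : AlexandrovDiscrete (Set.range f) := IsInducing.subtypeVal.alexandrovDiscrete
    obtain ⟨t, htf, ht, hmax⟩ := aux_basic f
    obtain ⟨h, hc, hU, z, hz⟩ := aux_map (Z := Set.range f)
      ((fun p : Set X × Set Y => (Subtype.val ⁻¹' p.2 : Set (Set.range f))) '' t)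
      (htf.image _) (by
        rintro _ ⟨p, hp, rfl⟩
        exact (ht p hp).2.1.preimage continuous_subtype_val)
    obtain ⟨_, x, rfl⟩ := z
    let g : C(X, Y) := ⟨fun x => (h ⟨f x, x, rfl⟩ : Y),
      continuous_subtype_val.comp (hc.comp (f.continuous.subtype_mk _))⟩
    have := hmax g (fun p hp y hy =>
      hU _ ⟨p, hp, rfl⟩ ⟨f y, y, rfl⟩ ((ht p hp).2.2 hy)) x
    exact hz ((subtype_specializes_iff _ _).2 this)
  · rintro ⟨hcomp, hfin⟩
    rw [alexandrovDiscrete_iff_nhds]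
    intro f
    refine le_antisymm ?_ ?_
    · rw [Filter.le_principal_iff]
      have hO : IsOpen (⋂ y ∈ Set.range f, {g : C(X, Y) | MapsTo g (f ⁻¹' {y}) (nhdsKer {y})}) :=
        (hfin f).isOpen_biInter fun y _ =>
          ContinuousMap.isOpen_setOfPred_mapsTo (hcomp _) isOpen_nhdsKer
      refine Filter.mem_of_superset (hO.mem_nhds ?_) ?_
      · refine mem_iInter₂.2 fun y _ x hx => ?_
        rw [mem_singleton_iff.1 hx]
        exact subset_nhdsKer rfl
      · intro g hg
        have hg' : ∀ x, g x ⤳ f x := fun x => by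
          simpa using mem_iInter₂.1 hg (f x) ⟨x, rfl⟩ (show x ∈ f ⁻¹' {f x} from rfl)
        rw [mem_nhdsKer_singleton]
        change Filter.Tendsto id (𝓝 g) (𝓝 f)
        rw [ContinuousMap.tendsto_nhds_compactOpen]
        intro K hK U hU hfK
        exact (ContinuousMap.isOpen_setOfPred_mapsTo hK hU).mem_nhds
          fun x hx => (hg' x).mem_open hU (hfK hx)
    · intro s hs
      intro g hg
      rw [mem_nhdsKer_singleton] at hg
      exact mem_of_mem_nhds (hg hs)
end

section
/- For every infinite T0 Alexandroff space X, the space C(X,X) of continuous self-maps of X with the compact-open topology is not an Alexandroff space. -/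
open Set Topology Filter in
theorem aux_order {P : Type*} [PartialOrder P] [Infinite P]
    (H : ∀ f : P → P, Monotone f → ∃ F : Finset P, ∀ g : P → P, Monotone g →
      (∀ x ∈ F, g x ≤ f x) → ∀ x, g x ≤ f x) : False := by
  classical
  have step1 : ∃ a b : P, a < b := by
    by_contra! hab
    have anti : ∀ x y : P, x ≤ y → x = y := fun x y h => by
      by_contra hne
      exact hab x y (lt_of_le_of_ne h hne)
    obtain ⟨c⟩ : Nonempty P := inferInstance
    obtain ⟨F, hF⟩ := H (fun _ => c) monotone_const
    obtain ⟨x, hx⟩ := Infinite.exists_notMem_finset (insert c F)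
    have h := hF (fun x => if x ∈ F then c else x)
      (fun x y h => by rw [anti x y h]) (fun x hx => by simp [hx]) x
    simp only [Finset.mem_insert, not_or] at hx
    simp only [hx.2, if_false] at h
    exact hx.1 (anti _ _ h)
  obtain ⟨a, b, hab⟩ := step1
  have two : ∀ D : Set P, IsLowerSet D → Monotone (fun x => if x ∈ D then a else b) := by
    intro D hD x y hxy
    by_cases hy : y ∈ D
    · simp [hy, hD hxy hy]
    · by_cases hx : x ∈ D
      · simp [hx, hy, hab.le]
      · simp [hx, hy]
  have step2 : ∀ D : Set P, IsLowerSet D → ∃ F : Finset P, (∀ x ∈ F, x ∈ D) ∧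
      ∀ x ∈ D, ∃ y ∈ F, x ≤ y := by
    intro D hD
    obtain ⟨F, hF⟩ := H _ (two D hD)
    refine ⟨F.filter (· ∈ D), by simp, fun x hx => ?_⟩
    have h := hF _ (two {x | ∃ y ∈ F.filter (· ∈ D), x ≤ y}
      (fun x y hxy ⟨z, hz, hxz⟩ => ⟨z, hz, hxy.trans hxz⟩)) (fun y hy => ?_) x
    · by_contra hn
      have hn' : x ∉ {x | ∃ y ∈ F.filter (· ∈ D), x ≤ y} := hn
      rw [if_pos hx, if_neg hn'] at h
      exact absurd h hab.not_ge
    · by_cases hyD : y ∈ D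
      · have : y ∈ {x | ∃ y ∈ F.filter (· ∈ D), x ≤ y} := ⟨y, by simp [hy, hyD], le_rfl⟩
        rw [if_pos this, if_pos hyD]
      · rw [if_neg hyD]
        split_ifs
        · exact hab.le
        · exact le_rfl
  have step3 : ∃ c : ℕ → P, StrictAnti c := by
    obtain ⟨s⟩ : Nonempty (ℕ ↪ P) := ⟨Infinite.natEmbedding P⟩
    obtain ⟨g, hg | hg⟩ := exists_increasing_or_nonincreasing_subseq (fun x y : P => y < x) s
    · exact ⟨fun n => s (g n), fun m n h => hg m n h⟩
    · exfalso
      obtain ⟨F, hFD, hF⟩ := step2 {x | ∃ n, x ≤ s (g n)}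
        (fun x y hxy ⟨n, hn⟩ => ⟨n, hxy.trans hn⟩)
      choose! k hk using hFD
      obtain ⟨y, hy, hle⟩ := hF (s (g (F.sup k + 1))) ⟨_, le_rfl⟩
      have hlt : k y < F.sup k + 1 := Nat.lt_succ_of_le (Finset.le_sup hy)
      refine hg _ _ hlt (lt_of_le_of_ne (hle.trans (hk y hy)) fun h => ?_)
      have := g.injective (s.injective h)
      omega
  obtain ⟨c, hc⟩ := step3
  obtain ⟨l, hl⟩ : ∃ l : P, (∃ x, ∀ n, x ≤ c n) → ∀ n, l ≤ c n := by
    by_cases h : ∃ x, ∀ n, x ≤ c n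
    · exact ⟨h.choose, fun _ => h.choose_spec⟩
    · exact ⟨a, fun h' => absurd h' h⟩
  let r : P → ℕ := fun x => sInf {n | ¬ x ≤ c n}
  have mono : ∀ φ : ℕ → ℕ, Monotone φ →
      Monotone (fun x => if ∀ n, x ≤ c n then l else c (φ (r x))) := by
    intro φ hφ x y hxy
    by_cases hy : ∀ n, y ≤ c n
    · have hx : ∀ n, x ≤ c n := fun n => hxy.trans (hy n)
      simp only [if_pos hx, if_pos hy, le_refl]
    · by_cases hx : ∀ n, x ≤ c n
      · simp only [if_pos hx, if_neg hy]
        exact hl ⟨x, hx⟩ _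
      · simp only [if_neg hx, if_neg hy]
        refine hc.antitone (hφ ?_)
        push Not at hx
        have h1 : r x ∈ {n | ¬ x ≤ c n} := Nat.sInf_mem hx
        exact Nat.sInf_le (fun h => h1 (hxy.trans h))
  obtain ⟨F, hF⟩ := H _ (mono id monotone_id)
  have h := hF _ (mono (fun n => min (F.sup r) n) (fun m n h => min_le_min le_rfl h))
    (fun x hx => by
      have : r x ≤ F.sup r := Finset.le_sup hx
      simp [this]) (c (F.sup r))
  have hn : ¬ ∀ n, c (F.sup r) ≤ c n := fun h =>
    absurd (h (F.sup r + 1)) (hc (Nat.lt_succ_self _)).not_ge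
  have hr : F.sup r < r (c (F.sup r)) := by
    push Not at hn
    have h1 : r (c (F.sup r)) ∈ {n | ¬ c (F.sup r) ≤ c n} := Nat.sInf_mem hn
    by_contra hcon
    exact h1 (hc.antitone (not_lt.mp hcon))
  simp only [if_neg hn, min_eq_left hr.le, id] at h
  exact absurd h (hc hr).not_ge

theorem aux_top {X : Type*} [TopologicalSpace X] [AlexandrovDiscrete X]
    [AlexandrovDiscrete C(X, X)] (f : C(X, X)) :
    ∃ F : Finset X, ∀ g : C(X, X), (∀ x ∈ F, g x ⤳ f x) → ∀ x, g x ⤳ f x := by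
  classical
  have hopen : IsOpen (⋂ x : X, {g : C(X, X) | g x ∈ nhdsKer {f x}}) :=
    isOpen_iInter fun x => isOpen_nhdsKer.preimage (continuous_eval_const x)
  have hmem : (⋂ x : X, {g : C(X, X) | g x ∈ nhdsKer {f x}}) ∈ nhds f := by
    refine hopen.mem_nhds ?_
    simp only [Set.mem_iInter, Set.mem_ofPred_eq]
    exact fun x => subset_nhdsKer rfl
  have hle : (⨅ x : X, Filter.principal {g : C(X, X) | g x ⤳ f x}) ≤ nhds f := by
    rw [ContinuousMap.nhds_compactOpen]
    refine le_iInf fun K => le_iInf fun hK => le_iInf fun U => le_iInf fun hU => le_iInf fun hf => ?_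
    obtain ⟨t, ht, hKt⟩ := hK.elim_nhds_subcover (fun x => nhdsKer {x})
      (fun x _ => isOpen_nhdsKer.mem_nhds (subset_nhdsKer rfl))
    rw [Filter.le_principal_iff]
    refine Filter.mem_of_superset ((Filter.biInter_finset_mem t).2 fun x _ =>
      Filter.mem_iInf_of_mem x (Filter.mem_principal_self _)) ?_
    intro g hg y hy
    simp only [Set.mem_iInter, Set.mem_ofPred_eq] at hg
    obtain ⟨x, hx, hyx⟩ := Set.mem_iUnion₂.1 (hKt hy)
    have hyx' : y ⤳ x := by simpa [mem_nhdsKer_singleton] using hyx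
    exact ((hyx'.map g.continuous).trans (hg x hx)).mem_open hU (hf (ht x hx))
  have := hle hmem
  rw [Filter.mem_iInf_finite] at this
  obtain ⟨F, hF⟩ := this
  refine ⟨F, fun g hg => ?_⟩
  rw [Filter.iInf_principal_finset, Filter.mem_principal] at hF
  have := hF (show g ∈ _ by simpa using hg)
  simpa [mem_nhdsKer_singleton] using this

/-- For every infinite T0 Alexandroff space `X`, the space `C(X,X)` of continuous
self-maps with the compact-open topology is not Alexandroff. -/
theorem stmt10 {X : Type*} [TopologicalSpace X] [AlexandrovDiscrete X] [T0Space X]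
    [Infinite X] : ¬ AlexandrovDiscrete C(X, X) := by
  intro hA
  let _ : PartialOrder X :=
    { le := fun x y => x ⤳ y
      le_refl := fun x => specializes_rfl
      le_trans := fun x y z h1 h2 => h1.trans h2
      le_antisymm := fun x y h1 h2 => (h1.antisymm h2).eq }
  have hcont : ∀ f : X → X, Monotone f → Continuous f := by
    intro f hf
    refine ⟨fun U hU => ?_⟩
    rw [isOpen_iff_forall_specializes]
    intro x y hxy hy
    have h : f x ⤳ f y := hf hxy
    exact h.mem_open hU hy
  refine aux_order (P := X) fun f hf => ?_
  obtain ⟨F, hF⟩ := aux_top ⟨f, hcont f hf⟩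
  exact ⟨F, fun g hg h => hF ⟨g, hcont g hg⟩ h⟩
end

section
/- If X is a hereditarily compact T0 Alexandroff space and Y is a T0 Alexandroff space satisfying the descending chain condition, then C(X,Y) with the compact-open topology is an Alexandroff space. -/
open Topology in
lemma aux_cover {Z : Type*} [TopologicalSpace Z] [AlexandrovDiscrete Z] {S : Set Z}
    (hS : IsCompact S) : ∃ t : Finset Z, (∀ a ∈ t, a ∈ S) ∧ ∀ s ∈ S, ∃ a ∈ t, s ⤳ a := by
  obtain ⟨t, ht, hc⟩ := hS.elim_nhds_subcover (fun x => nhdsKer {x})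
    (fun x _ => isOpen_nhdsKer.mem_nhds (subset_nhdsKer rfl))
  refine ⟨t, ht, fun s hs => ?_⟩
  have := hc hs
  simp only [Set.mem_iUnion] at this
  obtain ⟨a, ha, h⟩ := this
  exact ⟨a, ha, by simpa [mem_nhdsKer_singleton] using h⟩

lemma aux_fin {Y : Type*} [TopologicalSpace Y] [AlexandrovDiscrete Y] [T0Space Y]
    (hY : ¬ ∃ c : ℕ → Y, ∀ n, specLE (c (n + 1)) (c n) ∧ c (n + 1) ≠ c n)
    {S : Set Y} (hS : ∀ T ⊆ S, IsCompact T) : S.Finite := by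
  have wf : WellFounded (fun a b : Y => specLE a b ∧ a ≠ b) := by
    rw [wellFounded_iff_isEmpty_descending_chain]
    exact ⟨fun c => hY ⟨c.1, c.2⟩⟩
  have key : ∀ y : Y, {s ∈ S | s ⤳ y}.Finite := by
    intro y
    induction y using wf.induction with
    | _ y ih =>
      obtain ⟨t, ht, hc⟩ := aux_cover (hS {s ∈ S | s ⤳ y ∧ s ≠ y} (fun s hs => hs.1))
      have hfin : (⋃ a ∈ t, {s ∈ S | s ⤳ a}).Finite :=
        t.finite_toSet.biUnion fun a ha =>
          ih a ⟨specializes_iff_mem_closure.1 (ht a ha).2.1, (ht a ha).2.2⟩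
      refine (hfin.insert y).subset fun s hs => ?_
      by_cases h : s = y
      · exact Or.inl h
      · obtain ⟨a, ha, hsa⟩ := hc s ⟨hs.1, hs.2, h⟩
        exact Or.inr (Set.mem_biUnion ha ⟨hs.1, hsa⟩)
  obtain ⟨t, ht, hc⟩ := aux_cover (hS S subset_rfl)
  refine (t.finite_toSet.biUnion fun a _ => key a).subset fun s hs => ?_
  obtain ⟨a, ha, hsa⟩ := hc s hs
  exact Set.mem_biUnion ha ⟨hs, hsa⟩

/-- If `X` is a hereditarily compact T0 Alexandroff space and `Y` is a T0 Alexandroff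
space satisfying the descending chain condition, then `C(X,Y)` with the compact-open
topology is Alexandroff. -/
theorem stmt11 {X Y : Type*} [TopologicalSpace X] [AlexandrovDiscrete X] [T0Space X]
    [TopologicalSpace Y] [AlexandrovDiscrete Y] [T0Space Y]
    (hX : ∀ S : Set X, IsCompact S)
    (hY : ¬ ∃ c : ℕ → Y, ∀ n, specLE (c (n + 1)) (c n) ∧ c (n + 1) ≠ c n) :
    AlexandrovDiscrete C(X, Y) := by
  refine ⟨fun 𝒮 h𝒮 => isOpen_iff_mem_nhds.2 fun f hf => ?_⟩
  have hfin : (Set.range f).Finite := aux_fin hY fun T hT => by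
    rw [← Set.image_preimage_eq_of_subset hT]
    exact (hX _).image f.continuous
  choose t ht hc using fun y : Y => aux_cover (hX (f ⁻¹' {y}))
  let F : Set X := ⋃ y ∈ Set.range f, (t y : Set X)
  have hF : F.Finite := hfin.biUnion fun y _ => (t y).finite_toSet
  have hN : IsOpen (⋂ x ∈ F, {g : C(X, Y) | g x ∈ nhdsKer {f x}}) :=
    hF.isOpen_biInter fun x _ => isOpen_nhdsKer.preimage (continuous_eval_const (F := C(X, Y)) x)
  refine Filter.mem_of_superset (hN.mem_nhds ?_) ?_
  · exact Set.mem_iInter₂.2 fun x _ => subset_nhdsKer rfl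
  · intro g hg U hU
    have hgf : g ⤳ f := by
      rw [← ContinuousMap.specializes_coe, specializes_pi]
      intro x
      obtain ⟨a, ha, hxa⟩ := hc (f x) x rfl
      have h1 : f a = f x := ht _ _ ha
      have h2 := Set.mem_iInter₂.1 hg a (Set.mem_biUnion ⟨x, rfl⟩ ha)
      have h3 : g a ⤳ f a := by simpa [mem_nhdsKer_singleton] using h2
      exact h1 ▸ (hxa.map g.continuous).trans h3
    exact hgf.mem_open (h𝒮 U hU) (hf U hU)
end

section
/- Let X and Y be T0 Alexandroff spaces and let f, g : X → Y be continuous maps such that f(x) ∼ g(x) (f(x) and g(x) are comparable in the specialization order of Y) for every x ∈ X. Then f is homotopic to g by a homotopy that is constant on the set {x ∈ X : f(x) = g(x)}. -/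
/-- If `f, g : X → Y` are continuous maps between T0 Alexandroff spaces with `f(x)` and
`g(x)` comparable for all `x`, then `f` and `g` are homotopic rel the set where they
agree. -/
theorem stmt12 {X Y : Type*} [TopologicalSpace X] [AlexandrovDiscrete X] [T0Space X]
    [TopologicalSpace Y] [AlexandrovDiscrete Y] [T0Space Y]
    (f g : C(X, Y)) (h : ∀ x, specComp (f x) (g x)) :
    f.HomotopicRel g {x | f x = g x} := by
  classical
  have h' : ∀ x, f x ⤳ g x ∨ g x ⤳ f x := fun x => by
    rcases h x with h | h
    · exact Or.inl (specializes_iff_mem_closure.2 h)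
    · exact Or.inr (specializes_iff_mem_closure.2 h)
  obtain ⟨m, hmf, hmg, hm⟩ : ∃ m : X → Y, (∀ x, m x ⤳ f x) ∧ (∀ x, m x ⤳ g x) ∧
      ∀ x, m x = f x ∨ m x = g x := by
    refine ⟨fun x => if f x ⤳ g x then f x else g x, fun x => ?_, fun x => ?_, fun x => ?_⟩
    · by_cases hx : f x ⤳ g x
      · simp only [hx, if_true]; exact specializes_rfl
      · simp only [hx, if_false]; exact (h' x).resolve_left hx
    · by_cases hx : f x ⤳ g x
      · simp only [hx, if_true]
      · simp only [hx, if_false]; exact specializes_rfl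
    · by_cases hx : f x ⤳ g x <;> simp [hx]
  have hmm : ∀ x y, x ⤳ y → m x ⤳ m y := fun x y hxy => by
    rcases hm y with e | e <;> rw [e]
    · exact (hmf x).trans (hxy.map f.continuous)
    · exact (hmg x).trans (hxy.map g.continuous)
  let H : unitInterval × X → Y := fun p =>
    if p.1 = 0 then f p.2 else if p.1 = 1 then g p.2 else m p.2
  have hH : Continuous H := by
    rw [continuous_iff_continuousAt]
    rintro ⟨t₀, x₀⟩
    have key : ∀ᶠ p in nhds (t₀, x₀), H p ⤳ H (t₀, x₀) := by
      have hx : ∀ᶠ p : unitInterval × X in nhds (t₀, x₀), p.2 ⤳ x₀ := by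
        have : ∀ᶠ x in nhds x₀, x ⤳ x₀ := by
          have h1 : nhdsKer {x₀} ∈ nhds x₀ :=
            isOpen_nhdsKer.mem_nhds (subset_nhdsKer rfl)
          filter_upwards [h1] with x hx
          simpa using hx
        exact (continuous_snd.tendsto (t₀, x₀)).eventually this
      have hne : ∀ a : unitInterval, t₀ ≠ a →
          ∀ᶠ p : unitInterval × X in nhds (t₀, x₀), p.1 ≠ a := fun a ha =>
        (continuous_fst.tendsto (t₀, x₀)).eventually (isOpen_ne.mem_nhds ha)
      by_cases h0 : t₀ = 0
      · have h1 : t₀ ≠ 1 := by rw [h0]; exact zero_ne_one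
        filter_upwards [hx, hne 1 h1] with p hp hp1
        simp only [H, h0, hp1, if_true, if_false]
        split_ifs
        · exact hp.map f.continuous
        · exact (hmf _).trans (hp.map f.continuous)
      · by_cases h1 : t₀ = 1
        · filter_upwards [hx, hne 0 h0] with p hp hp0
          simp only [H, h0, h1, hp0, if_true, if_false, one_ne_zero]
          split_ifs
          · exact hp.map g.continuous
          · exact (hmg _).trans (hp.map g.continuous)
        · filter_upwards [hx, hne 0 h0, hne 1 h1] with p hp hp0 hp1
          simp only [H, h0, h1, hp0, hp1, if_false]
          exact hmm _ _ hp
    intro s hs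
    obtain ⟨u, hus, hu, hxu⟩ := mem_nhds_iff.1 hs
    rw [Filter.mem_map]
    filter_upwards [key] with p hp
    exact hus (hp.mem_open hu hxu)
  refine ⟨⟨⟨⟨H, hH⟩, fun x => by simp [H], fun x => by simp [H]⟩, ?_⟩⟩
  intro t x hx
  have hx' : f x = g x := hx
  have hmx : m x = f x := by rcases hm x with e | e <;> simp [e, hx']
  change H (t, x) = f x
  simp only [H]
  split_ifs
  · rfl
  · exact hx'.symm
  · exact hmx
end

section
/- Let X and Y be T0 Alexandroff spaces. Suppose there is a sequence of continuous maps f_1, f_2, … : X → Y such that f_i(x) ∼ f_{i+1}(x) for all x ∈ X and all i ∈ ℕ, and a continuous map f_ω : X → Y such that for every x ∈ X there exists N ∈ ℕ with f_n(x) ≤ f_ω(x) for all n ≥ N. Then f_1 is homotopic to f_ω. -/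
open Topology Filter in
lemma stmt13_exists {X Y : Type*} [TopologicalSpace X] [TopologicalSpace Y]
    (f : ℕ → C(X, Y))
    (hcomp : ∀ (i : ℕ) (x : X), specComp (f i x) (f (i + 1) x)) (s : ℝ) (hs : 0 ≤ s) (x : X) :
    ∃ y : Y, (∃ k : ℕ, |s - k| < 1 ∧ y = f k x) ∧ ∀ k : ℕ, |s - k| < 1 → y ⤳ f k x := by
  have h1 := Nat.floor_le hs
  have h2 := Nat.lt_floor_add_one s
  generalize ⌊s⌋₊ = n at h1 h2
  have key : ∀ k : ℕ, |s - k| < 1 → k = n ∨ (k = n + 1 ∧ (n : ℝ) < s) := by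
    intro k hk
    rw [abs_lt] at hk
    have a : (k : ℝ) < n + 2 := by linarith
    have b : (n : ℝ) < k + 1 := by linarith
    have a' : k < n + 2 := by exact_mod_cast a
    have b' : n < k + 1 := by exact_mod_cast b
    rcases (show k = n ∨ k = n + 1 by omega) with h | h
    · exact Or.inl h
    · subst h
      push_cast at hk
      exact Or.inr ⟨rfl, by linarith⟩
  have hn : |s - n| < 1 := by rw [abs_lt]; constructor <;> linarith
  rcases h1.eq_or_lt with h | h
  · refine ⟨f n x, ⟨n, hn, rfl⟩, fun k hk => ?_⟩
    rcases key k hk with rfl | ⟨_, h'⟩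
    · exact specializes_rfl
    · linarith
  · rcases hcomp n x with c | c
    · have c := specializes_iff_mem_closure.2 c
      refine ⟨f n x, ⟨n, hn, rfl⟩, fun k hk => ?_⟩
      rcases key k hk with rfl | ⟨rfl, _⟩
      · exact specializes_rfl
      · exact c
    · have c := specializes_iff_mem_closure.2 c
      refine ⟨f (n+1) x, ⟨n+1, ?_, rfl⟩, fun k hk => ?_⟩
      · push_cast
        rw [abs_lt]; constructor <;> linarith
      rcases key k hk with rfl | ⟨rfl, _⟩
      · exact c
      · exact specializes_rfl

/-- Let `f_1, f_2, … : X → Y` be continuous maps between T0 Alexandroff spaces with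
`f_i(x)` comparable to `f_{i+1}(x)` for all `x, i`, and let `f_ω` be continuous with:
for every `x` there is `N` such that `f_n(x) ≤ f_ω(x)` for all `n ≥ N`. Then `f_1` is
homotopic to `f_ω`. -/
theorem stmt13 {X Y : Type*} [TopologicalSpace X] [AlexandrovDiscrete X] [T0Space X]
    [TopologicalSpace Y] [AlexandrovDiscrete Y] [T0Space Y]
    (f : ℕ → C(X, Y)) (fω : C(X, Y))
    (hcomp : ∀ (i : ℕ) (x : X), specComp (f i x) (f (i + 1) x))
    (hlim : ∀ x : X, ∃ N : ℕ, ∀ n ≥ N, specLE (f n x) (fω x)) :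
    (f 1).Homotopic fω := by
  classical
  have hex : ∀ (s : ℝ) (x : X), ∃ y : Y, (0 ≤ s → ∃ k : ℕ, |s - k| < 1 ∧ y = f k x) ∧
      (0 ≤ s → ∀ k : ℕ, |s - k| < 1 → y ⤳ f k x) := by
    intro s x
    by_cases hs : 0 ≤ s
    · obtain ⟨y, h1, h2⟩ := stmt13_exists f hcomp s hs x
      exact ⟨y, fun _ => h1, fun _ => h2⟩
    · exact ⟨fω x, fun h => absurd h hs, fun h => absurd h hs⟩
  choose m hm1' hm2' using hex
  have hm1 := fun s hs x => hm1' s x hs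
  have hm2 := fun s hs x => hm2' s x hs
  let H : unitInterval × X → Y := fun p =>
    if (p.1 : ℝ) < 1 then m (1 / (1 - (p.1 : ℝ))) p.2 else fω p.2
  have hpos : ∀ t : unitInterval, 0 ≤ 1 / (1 - (t : ℝ)) := fun t =>
    one_div_nonneg.2 (by linarith [t.2.2])
  have hH : Continuous H := by
    rw [continuous_iff_continuousAt]
    rintro ⟨t0, x0⟩
    rw [ContinuousAt, (nhds_basis_opens _).tendsto_right_iff]
    rintro U ⟨hU0, hU⟩
    by_cases ht : (t0 : ℝ) < 1
    · have e : H (t0, x0) = m (1 / (1 - (t0 : ℝ))) x0 := if_pos ht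
      rw [e] at hU0
      obtain ⟨k, hk, hk'⟩ := hm1 _ (hpos t0) x0
      rw [hk'] at hU0
      have c1 : ContinuousAt (fun p : unitInterval × X => (p.1 : ℝ)) (t0, x0) := by fun_prop
      have c2 : ContinuousAt (fun p : unitInterval × X => |1 / (1 - (p.1 : ℝ)) - k|) (t0, x0) := by
        refine ContinuousAt.abs (ContinuousAt.sub (ContinuousAt.div continuousAt_const
          (continuousAt_const.sub c1) ?_) continuousAt_const)
        show 1 - (t0 : ℝ) ≠ 0
        linarith
      have c3 : ContinuousAt (fun p : unitInterval × X => f k p.2) (t0, x0) := by fun_prop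
      filter_upwards [c1.eventually_lt_const ht, c2.eventually_lt_const hk,
        c3.eventually_mem (hU.mem_nhds hU0)] with p h1 h2 h3
      have e : H p = m (1 / (1 - (p.1 : ℝ))) p.2 := if_pos h1
      rw [e]
      exact (hm2 _ (hpos _) _ k h2).mem_open hU h3
    · have e : H (t0, x0) = fω x0 := if_neg ht
      rw [e] at hU0
      have ht1 : (t0 : ℝ) = 1 := le_antisymm t0.2.2 (not_lt.1 ht)
      obtain ⟨N, hN⟩ := hlim x0
      have hV : IsOpen (⋂ n : ℕ, ⋂ _ : N ≤ n, f n ⁻¹' U) :=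
        isOpen_iInter fun n => isOpen_iInter fun _ => hU.preimage (f n).continuous
      have hx0 : x0 ∈ ⋂ n : ℕ, ⋂ _ : N ≤ n, f n ⁻¹' U := by
        simp only [Set.mem_iInter]
        intro n hn
        exact (specializes_iff_mem_closure.2 (hN n hn)).mem_open hU hU0
      have c0 : ContinuousAt (fun p : unitInterval × X => p.2) (t0, x0) := by fun_prop
      have c1 : ContinuousAt (fun p : unitInterval × X => (p.1 : ℝ)) (t0, x0) := by fun_prop
      have c3 : ContinuousAt (fun p : unitInterval × X => fω p.2) (t0, x0) := by fun_prop
      have hNpos : (0 : ℝ) < N + 1 := by positivity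
      have hlt : 1 - 1 / ((N : ℝ) + 1) < t0 := by
        rw [ht1]
        have : 0 < 1 / ((N : ℝ) + 1) := by positivity
        linarith
      filter_upwards [c0.eventually_mem (hV.mem_nhds hx0), c1.eventually_const_lt hlt,
        c3.eventually_mem (hU.mem_nhds hU0)] with p h1 h2 h3
      by_cases hp : (p.1 : ℝ) < 1
      · have e : H p = m (1 / (1 - (p.1 : ℝ))) p.2 := if_pos hp
        rw [e]
        obtain ⟨k, hk, hk'⟩ := hm1 _ (hpos p.1) p.2
        rw [hk']
        have h4 : (N : ℝ) + 1 < 1 / (1 - (p.1 : ℝ)) := by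
          rw [lt_one_div hNpos (by linarith)]
          linarith
        rw [abs_lt] at hk
        have h5 : (N : ℝ) < k := by linarith
        have h6 : N < k := by exact_mod_cast h5
        simp only [Set.mem_iInter] at h1
        exact h1 k h6.le
      · have e : H p = fω p.2 := if_neg hp
        rw [e]
        exact h3
  refine ⟨⟨⟨H, hH⟩, fun x => ?_, fun x => ?_⟩⟩
  · show H (0, x) = f 1 x
    have e : H (0, x) = m 1 x := by simp [H]
    rw [e]
    obtain ⟨k, hk, hk'⟩ := hm1 1 zero_le_one x
    rw [abs_lt] at hk
    have a : (k : ℝ) < 2 := by linarith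
    have b : (0 : ℝ) < k := by linarith
    have a' : k < 2 := by exact_mod_cast a
    have b' : 0 < k := by exact_mod_cast b
    obtain rfl : k = 1 := by omega
    exact hk'
  · show H (1, x) = fω x
    simp [H]
end

section
/- The Khalimsky half-line, i.e. the set ℕ with the partial order n ⊑ m iff n = m, or |n − m| = 1 and m is even, equipped with the Alexandroff topology whose open sets are the down-sets, is contractible. -/
/-- The Khalimsky half-line: `ℕ` carrying the Alexandroff topology of `khalimskyLE`. -/
def KhalimskyHalfLine : Type := ℕ

/-- The Alexandroff topology associated to `khalimskyLE`: open sets are the down-sets. -/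
instance : TopologicalSpace KhalimskyHalfLine where
  IsOpen U := ∀ m ∈ U, ∀ n : ℕ, khalimskyLE n m → n ∈ U
  isOpen_univ := fun _ _ _ _ => trivial
  isOpen_inter := fun _ _ hU hV m hm n hnm => ⟨hU m hm.1 n hnm, hV m hm.2 n hnm⟩
  isOpen_sUnion := fun S hS m hm n hnm => by
    obtain ⟨U, hU, hmU⟩ := hm
    exact ⟨U, hU, hS U hU m hmU n hnm⟩


theorem kh_trans {a b c : ℕ} (h : khalimskyLE a b) (h' : khalimskyLE b c) :
    khalimskyLE a c := by
  simp only [khalimskyLE, Nat.even_iff] at *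
  omega

open Topology Filter in
theorem kh_ev (x : KhalimskyHalfLine) : ∀ᶠ y : KhalimskyHalfLine in 𝓝 x, khalimskyLE y x := by
  have : IsOpen {y : KhalimskyHalfLine | khalimskyLE y x} := by
    intro m hm n hn
    exact kh_trans hn hm
  exact this.mem_nhds (Or.inl rfl)

open Topology Filter in
theorem kh_cont {Y : Type*} [TopologicalSpace Y] (f : Y → KhalimskyHalfLine)
    (h : ∀ p, ∀ᶠ q in 𝓝 p, khalimskyLE (f q) (f p)) : Continuous f := by
  refine continuous_def.2 fun U hU => isOpen_iff_mem_nhds.2 fun p hp => ?_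
  filter_upwards [h p] with q hq
  exact hU _ hp _ hq

theorem kh_min {a b x y : ℕ} (h : khalimskyLE y x) (h' : khalimskyLE b a) :
    khalimskyLE (min y b) (min x a) := by
  simp only [khalimskyLE, Nat.even_iff] at *
  omega

noncomputable def khK (r : ℝ) : ℕ := ⌊r⌋₊ + ⌈r⌉₊

theorem khK_nat (n : ℕ) : khK n = 2 * n := by simp [khK]; omega

theorem khK_mid {n : ℕ} {r : ℝ} (h1 : (n : ℝ) < r) (h2 : r < n + 1) : khK r = 2 * n + 1 := by
  have hr : 0 ≤ r := (Nat.cast_nonneg n).trans h1.le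
  have a : ⌊r⌋₊ = n := (Nat.floor_eq_iff hr).2 ⟨h1.le, h2⟩
  have b : ⌈r⌉₊ = n + 1 := by
    rw [Nat.ceil_eq_iff (by simp)]
    push_cast
    exact ⟨by simpa using h1, h2.le⟩
  simp only [khK, a, b]; omega

open Topology Filter in
theorem khK_ev (r : ℝ) (hr : 0 ≤ r) : ∀ᶠ s in 𝓝 r, khalimskyLE (khK s) (khK r) := by
  have h1 := Nat.floor_le hr
  have h2 := Nat.lt_floor_add_one r
  set n := ⌊r⌋₊
  rcases h1.eq_or_lt with h | h
  · rw [← h, khK_nat]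
    filter_upwards [Ioo_mem_nhds (show (n : ℝ) - 1 < n by linarith)
      (show (n : ℝ) < n + 1 by linarith)] with s hs
    rcases lt_trichotomy s n with h3 | h3 | h3
    · rcases Nat.eq_zero_or_pos n with h0 | h0
      · left
        rw [h0] at h3 ⊢
        have : s ≤ 0 := by simpa using h3.le
        simp [khK, Nat.floor_of_nonpos this, Nat.ceil_eq_zero.2 this]
      · obtain ⟨m, hm⟩ : ∃ m, n = m + 1 := ⟨n - 1, by omega⟩
        have hs1 := hs.1
        rw [hm] at h3 hs1 ⊢
        push_cast at h3 hs1
        rw [khK_mid (n := m) (by linarith) h3]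
        exact Or.inr ⟨by omega, by simp⟩
    · rw [h3, khK_nat]; exact Or.inl rfl
    · rw [khK_mid h3 hs.2]
      exact Or.inr ⟨by omega, by simp⟩
  · filter_upwards [Ioo_mem_nhds h h2] with s hs
    rw [khK_mid hs.1 hs.2, khK_mid h h2]
    exact Or.inl rfl

open Classical in
noncomputable def khH (p : unitInterval × KhalimskyHalfLine) : KhalimskyHalfLine :=
  if (p.1 : ℝ) = 1 then p.2 else (min (p.2 : ℕ) (khK (p.1 / (1 - p.1))) : ℕ)

open Topology Filter in
theorem khH_cont : Continuous khH := by
  refine kh_cont _ ?_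
  rintro ⟨t, x⟩
  by_cases ht : (t : ℝ) = 1
  · have e1 : khH (t, x) = x := by simp [khH, ht]
    rw [e1]
    set N : ℕ := Nat.succ x with hN
    have e2 : ∀ᶠ s : unitInterval in 𝓝 t, (N : ℝ) * (1 - s) < s := by
      have c1 : Continuous fun s : unitInterval => (N : ℝ) * (1 - s) := by fun_prop
      have c2 : Continuous fun s : unitInterval => (s : ℝ) := by fun_prop
      exact c1.continuousAt.eventually_lt c2.continuousAt (by simp [ht])
    rw [nhds_prod_eq]
    filter_upwards [e2.prod_mk (kh_ev x)] with ⟨s, y⟩ ⟨hs, hy⟩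
    simp only at hs hy
    by_cases h1 : (s : ℝ) = 1
    · simpa [khH, h1] using hy
    · have h3 : (s : ℝ) < 1 := lt_of_le_of_ne s.2.2 h1
      have h4 : (N : ℝ) < s / (1 - s) := by rwa [lt_div_iff₀ (by linarith)]
      have h5 : N ≤ khK (s / (1 - s)) := by
        have := Nat.le_floor h4.le
        unfold khK; omega
      have h6 : @min ℕ _ y (khK (s / (1 - s))) = y := by
        apply min_eq_left
        refine le_trans ?_ h5
        simp only [khalimskyLE] at hy
        rcases hy with hy | ⟨hy | hy, -⟩
        · rw [hy]; exact Nat.le_succ _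
        · rw [hN, ← hy]; exact (Nat.le_succ _).trans (Nat.le_succ _)
        · rw [hN, ← hy]
      simp only [khH, h1, if_false]
      exact h6.symm ▸ hy
  · have h3 : (t : ℝ) < 1 := lt_of_le_of_ne t.2.2 ht
    have e2 : ∀ᶠ s : unitInterval in 𝓝 t, (s : ℝ) ≠ 1 :=
      (continuous_subtype_val.continuousAt (x := t)).eventually_ne ht
    have c : ContinuousAt (fun s : unitInterval => (s : ℝ) / (1 - s)) t := by
      apply ContinuousAt.div
      · fun_prop
      · fun_prop
      · linarith
    have e3 := c.eventually (khK_ev _ (div_nonneg t.2.1 (by linarith)))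
    rw [nhds_prod_eq]
    filter_upwards [(e2.and e3).prod_mk (kh_ev x)] with ⟨s, y⟩ ⟨⟨hs, hk⟩, hy⟩
    simp only at hs hy hk
    simp only [khH, hs, ht, if_false]
    exact kh_min hy hk

/-- The Khalimsky half-line is contractible. -/
theorem stmt15 : ContractibleSpace KhalimskyHalfLine := by
  rw [contractible_iff_id_nullhomotopic]
  refine ⟨(0 : ℕ), ContinuousMap.Homotopic.symm ⟨⟨⟨khH, khH_cont⟩, ?_, ?_⟩⟩⟩
  · intro x
    simp [khH, khK]
    exact Nat.min_zero x
  · intro x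
    simp [khH]
end

section
/- Let X be a T0 Alexandroff space in which every chain of the specialization order is finite and which has no beat points. If f : X → X is a continuous map such that either f(x) ≤ x for all x ∈ X, or f(x) ≥ x for all x ∈ X, then f = id_X. Consequently, every continuous retraction r : X → X with r(x) ∼ x for all x is the identity. -/
/-- `x` is an up-beat point: the set of points strictly above `x` has a smallest element. -/
def IsUpBeat {X : Type*} [TopologicalSpace X] (x : X) : Prop :=
  ∃ u, (specLE x u ∧ u ≠ x) ∧ ∀ y, specLE x y → y ≠ x → specLE u y

/-- `x` is a down-beat point: the set of points strictly below `x` has a largest element. -/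
def IsDownBeat {X : Type*} [TopologicalSpace X] (x : X) : Prop :=
  ∃ d, (specLE d x ∧ d ≠ x) ∧ ∀ y, specLE y x → y ≠ x → specLE y d

theorem aux_down {P : Type*} [PartialOrder P]
    (hc : ∀ C : Set P, (∀ a ∈ C, ∀ b ∈ C, a ≠ b → a ≤ b ∨ b ≤ a) → C.Finite)
    (hb : ∀ x : P, ¬ ∃ d, (d ≤ x ∧ d ≠ x) ∧ ∀ y, y ≤ x → y ≠ x → y ≤ d)
    (f : P → P) (hf : Monotone f) (hle : ∀ x, f x ≤ x) : f = id := by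
  have hwf : WellFounded ((· < ·) : P → P → Prop) := by
    rw [RelEmbedding.wellFounded_iff_isEmpty]
    refine ⟨fun e => ?_⟩
    refine Set.infinite_range_of_injective e.injective (hc _ ?_)
    rintro _ ⟨m, rfl⟩ _ ⟨n, rfl⟩ hne
    rcases lt_trichotomy m n with h | h | h
    · exact Or.inr (e.map_rel_iff.2 h).le
    · exact absurd (by rw [h]) hne
    · exact Or.inl (e.map_rel_iff.2 h).le
  funext x
  induction x using hwf.induction with
  | _ x ih =>
    by_contra hne
    refine hb x ⟨f x, ⟨hle x, hne⟩, fun y hy hyx => ?_⟩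
    have h := hf hy
    rwa [ih y (lt_of_le_of_ne hy hyx)] at h

/-- In a T0 Alexandroff space with all chains finite and no beat points, any continuous
self-map comparable to the identity (everywhere below it, or everywhere above it) is the
identity; consequently every comparative retraction is the identity. -/
theorem stmt16 {X : Type*} [TopologicalSpace X] [AlexandrovDiscrete X] [T0Space X]
    (hchain : ∀ C : Set X, (∀ a ∈ C, ∀ b ∈ C, a ≠ b → specComp a b) → C.Finite)
    (hbeat : ∀ x : X, ¬ IsUpBeat x ∧ ¬ IsDownBeat x) :
    (∀ f : X → X, Continuous f →
        ((∀ x, specLE (f x) x) ∨ (∀ x, specLE x (f x))) → f = id) ∧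
      ∀ r : X → X, Continuous r → r ∘ r = r → (∀ x, specComp (r x) x) → r = id := by
  have trans : ∀ {a b c : X}, specLE a b → specLE b c → specLE a c := by
    intro a b c h1 h2
    exact specializes_iff_mem_closure.1
      ((specializes_iff_mem_closure.2 h1).trans (specializes_iff_mem_closure.2 h2))
  let P : PartialOrder X :=
    { le := specLE
      le_refl := fun a => subset_closure rfl
      le_trans := fun a b c h1 h2 => trans h1 h2
      le_antisymm := fun a b h1 h2 =>
        ((specializes_iff_mem_closure.2 h1).antisymm (specializes_iff_mem_closure.2 h2)).eq }
  have mono : ∀ f : X → X, Continuous f → Monotone f := by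
    intro f hf a b h
    exact specializes_iff_mem_closure.1 ((specializes_iff_mem_closure.2 h).map hf)
  have down : ∀ f : X → X, Monotone f → (∀ x, f x ≤ x) → f = id :=
    fun f hf hle => aux_down hchain (fun x => (hbeat x).2) f hf hle
  have up : ∀ f : X → X, Monotone f → (∀ x, x ≤ f x) → f = id := by
    intro f hf hle
    refine aux_down (P := Xᵒᵈ) (fun C hC => hchain C ?_) (fun x => (hbeat x).1) f
      hf.dual hle
    intro a ha b hb' hne
    exact (hC a ha b hb' hne).symm
  refine ⟨fun f hf h => h.elim (down f (mono f hf)) (up f (mono f hf)), ?_⟩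
  intro r hr _ hcomp
  have hm := mono r hr
  have hcomp' : ∀ x, r x ≤ x ∨ x ≤ r x := hcomp
  classical
  have hg := down (fun x => if r x ≤ x then r x else x) (by
    intro x y hxy
    dsimp only
    split_ifs with h1 h2 h2
    · exact hm hxy
    · exact h1.trans hxy
    · exact ((hcomp' x).resolve_left h1).trans (hm hxy)
    · exact hxy) (by
    intro x
    split_ifs with h
    · exact h
    · exact le_rfl)
  refine up r hm fun x => ?_
  rcases hcomp' x with h | h
  · have := congrFun hg x
    simp only [h, if_true, id] at this
    exact this.ge
  · exact h
end

section
/- Let X be a T0 Alexandroff space such that every s-path in X is finite (an fp-space) and such that X is a C-core, i.e. every continuous retraction r : X → X with r(x) ∼ x for all x ∈ X is the identity. Then the connected component of the identity map id_X in the space C(X,X) with the compact-open topology is the singleton {id_X}. -/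
/-- `X` is an fp-space: every s-path (sequence of pairwise distinct points with
consecutive points comparable) is finite, i.e. there is no infinite s-path. -/
def NoInfiniteSPath (X : Type*) [TopologicalSpace X] : Prop :=
  ¬ ∃ p : ℕ → X, Function.Injective p ∧ ∀ n, specComp (p n) (p (n + 1))

/-- `X` is a C-core: its only comparative retraction is the identity. -/
def IsCCore (X : Type*) [TopologicalSpace X] : Prop :=
  ∀ r : X → X, Continuous r → r ∘ r = r → (∀ x, specComp (r x) x) → r = id


theorem up_witness {P : Type*} [PartialOrder P] (wf : WellFoundedLT P)
    (hno : ∀ r : P → P, Monotone r → r ∘ r = r → (∀ x, r x ≤ x ∨ x ≤ r x) → r = id) (x : P) :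
    ∃ s : Finset P, (∀ y ∈ s, x < y) ∧ ∀ a, x ≤ a → (∀ y ∈ s, a ≤ y) → a = x := by
  classical
  by_cases hne : (Set.Ioi x).Nonempty
  · obtain ⟨y, hy, hmin⟩ := wf.wf.has_min (Set.Ioi x) hne
    have hy' : x < y := hy
    by_cases hl : ∀ w, x < w → y ≤ w
    · exfalso
      have := hno (fun z => if z = x then y else z) ?_ ?_ ?_
      · have h := congrFun this x
        simp at h
        exact hy'.ne' h
      · intro a b hab
        dsimp only
        by_cases ha : a = x
        · by_cases hb : b = x
          · simp [ha, hb]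
          · simp only [ha, hb, if_true, if_false]
            exact hl b (lt_of_le_of_ne (ha ▸ hab) (Ne.symm hb))
        · by_cases hb : b = x
          · simp only [ha, hb, if_true, if_false]
            exact (hb ▸ hab).trans hy'.le
          · simpa [ha, hb] using hab
      · funext z
        by_cases hz : z = x
        · simp [hz, hy'.ne']
        · simp [hz]
      · intro z
        by_cases hz : z = x
        · right; simpa [hz] using hy'.le
        · left; simp [hz]
    · push Not at hl
      obtain ⟨w, hw, hyw⟩ := hl
      refine ⟨{y, w}, by simp [hy', hw], ?_⟩
      intro a hxa h
      have h1 : a ≤ y := h y (by simp)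
      have h2 : a ≤ w := h w (by simp)
      by_contra hax
      have hlt : x < a := lt_of_le_of_ne hxa (Ne.symm hax)
      have h3 := hmin a hlt
      have : a = y := by
        by_contra hne
        exact h3 (lt_of_le_of_ne h1 hne)
      exact hyw (this ▸ h2)
  · refine ⟨∅, by simp, ?_⟩
    intro a hxa _
    by_contra hax
    exact hne ⟨a, lt_of_le_of_ne hxa (Ne.symm hax)⟩

theorem fix_up {P : Type*} [PartialOrder P] (F : Set P) (hF : F.Finite) (U : P → Finset P)
    (hU : ∀ x, (∀ y ∈ U x, x < y) ∧ ∀ a, x ≤ a → (∀ y ∈ U x, a ≤ y) → a = x)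
    (hcl : ∀ x ∈ F, ∀ y ∈ U x, y ∈ F) (g : P → P) (hg : Monotone g)
    (h : ∀ z ∈ F, z ≤ g z) : ∀ z ∈ F, g z = z := by
  by_contra hc
  push Not at hc
  obtain ⟨z, hz, hgz⟩ := hc
  obtain ⟨m, hm⟩ := (hF.subset (Set.sep_subset F (fun z => g z ≠ z))).exists_maximal ⟨z, hz, hgz⟩
  refine hm.1.2 ((hU m).2 _ (h m hm.1.1) ?_)
  intro y hy
  have hmy := (hU m).1 y hy
  have : g y = y := by
    by_contra hgy
    exact absurd (hm.2 ⟨hcl m hm.1.1 y hy, hgy⟩ hmy.le) (not_le_of_gt hmy)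
  exact this ▸ hg hmy.le

def avoidStep {P : Type*} (N : P → Finset P) (A : Finset P) (x y : P) : Prop :=
  y ∈ N x ∧ y ∉ A

theorem reach_finite {P : Type*} (N : P → Finset P)
    (hN : ¬ ∃ p : ℕ → P, Function.Injective p ∧ ∀ n, p (n + 1) ∈ N (p n)) (x : P) :
    {y | Relation.ReflTransGen (avoidStep N ∅) x y}.Finite := by
  classical
  by_contra hinf
  apply hN
  let R : Finset P → P → Set P := fun A x => {y | Relation.ReflTransGen (avoidStep N A) x y}
  let T := {s : Finset P × P // s.2 ∉ s.1 ∧ ¬ (R s.1 s.2).Finite}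
  have key : ∀ s : T, ∃ t : T, t.1.1 = insert s.1.2 s.1.1 ∧ t.1.2 ∈ N s.1.2 := by
    rintro ⟨⟨A, x⟩, hx, hR⟩
    by_contra hc
    push Not at hc
    apply hR
    have hsub : R A x ⊆ {x} ∪ ⋃ y ∈ (N x).filter (fun y => y ∉ insert x A), R (insert x A) y := by
      intro z hz
      change Relation.ReflTransGen (avoidStep N A) x z at hz
      induction hz with
      | refl => left; rfl
      | @tail b w hb hw ih =>
        by_cases hwx : w = x
        · left; exact hwx
        · right
          have hwA : w ∉ insert x A := by
            simp only [Finset.mem_insert, not_or]; exact ⟨hwx, hw.2⟩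
          rcases ih with ih | ih
          · have : b = x := ih
            subst this
            simp only [Set.mem_iUnion]
            exact ⟨w, Finset.mem_filter.2 ⟨hw.1, hwA⟩, Relation.ReflTransGen.refl⟩
          · simp only [Set.mem_iUnion] at ih ⊢
            obtain ⟨y, hy, hyb⟩ := ih
            exact ⟨y, hy, Relation.ReflTransGen.tail hyb ⟨hw.1, hwA⟩⟩
    refine Set.Finite.subset ((Set.finite_singleton x).union
      (Set.Finite.biUnion (Finset.finite_toSet _) ?_)) hsub
    intro y hy
    have hy := Finset.mem_filter.1 (Finset.mem_coe.1 hy)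
    by_contra hyR
    exact hc ⟨⟨insert x A, y⟩, hy.2, hyR⟩ rfl hy.1
  choose f hf1 hf2 using key
  let s0 : T := ⟨⟨∅, x⟩, by simp, hinf⟩
  let q : ℕ → T := fun n => f^[n] s0
  have hq : ∀ n, q (n + 1) = f (q n) := fun n => Function.iterate_succ_apply' f n s0
  have hmem : ∀ n k, (q n).1.2 ∈ (q (n + k + 1)).1.1 := by
    intro n k
    induction k with
    | zero => rw [hq, hf1]; simp
    | succ k ih =>
      rw [hq, hf1]; exact Finset.mem_insert_of_mem ih
  have hlt : ∀ n m, n < m → (q n).1.2 ≠ (q m).1.2 := by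
    intro n m h he
    obtain ⟨k, rfl⟩ := Nat.exists_eq_add_of_lt h
    have := hmem n k
    rw [he] at this
    exact (q (n + k + 1)).2.1 this
  refine ⟨fun n => (q n).1.2, ?_, ?_⟩
  · intro n m h
    rcases lt_trichotomy n m with h' | h' | h'
    · exact absurd h (hlt _ _ h')
    · exact h'
    · exact absurd h.symm (hlt _ _ h')
  · intro n
    dsimp only
    rw [hq]; exact hf2 _

theorem stmt17 {X : Type*} [TopologicalSpace X] [AlexandrovDiscrete X] [T0Space X]
    (hfp : NoInfiniteSPath X) (hcore : IsCCore X) :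
    connectedComponent (ContinuousMap.id X : C(X, X)) = {ContinuousMap.id X} := by
  classical
  let _ : PartialOrder X :=
    { le := fun x y => x ⤳ y
      le_refl := fun x => specializes_rfl
      le_trans := fun _ _ _ h1 h2 => h1.trans h2
      le_antisymm := fun _ _ h1 h2 => (h1.antisymm h2).eq }
  have hle : ∀ x y : X, x ≤ y ↔ specLE x y := fun x y => specializes_iff_mem_closure
  have hopen : ∀ z : X, IsOpen {y : X | y ≤ z} := by
    intro z
    have h : {y : X | y ≤ z} = nhdsKer {z} := by
      ext y
      exact mem_nhdsKer_singleton.symm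
    rw [h]; exact isOpen_nhdsKer
  have hclosed : ∀ z : X, IsClosed {y : X | z ≤ y} := by
    intro z
    have h : {y : X | z ≤ y} = closure {z} := by
      ext y
      exact hle z y
    rw [h]; exact isClosed_closure
  have hcont : ∀ r : X → X, Monotone r → Continuous r := by
    intro r hr
    rw [continuous_def]
    intro s hs
    have h : r ⁻¹' s = ⋃ z ∈ r ⁻¹' s, {y : X | y ≤ z} := by
      ext y
      simp only [Set.mem_iUnion]
      constructor
      · intro hy; exact ⟨y, hy, le_refl y⟩
      · rintro ⟨z, hz, hyz⟩
        have h1 : r y ⤳ r z := hr hyz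
        have h2 : r y ∈ s := h1.mem_open hs hz
        exact h2
    rw [h]
    exact isOpen_biUnion fun z _ => hopen z
  have hmono : ∀ g : C(X, X), Monotone g := fun g a b hab => Specializes.map hab g.continuous
  have hcore' : ∀ r : X → X, Monotone r → r ∘ r = r → (∀ x, r x ≤ x ∨ x ≤ r x) → r = id := by
    intro r h1 h2 h3
    exact hcore r (hcont r h1) h2 (fun x => (h3 x).imp (hle _ _).1 (hle _ _).1)
  have wf1 : WellFoundedLT X := by
    refine ⟨wellFounded_iff_isEmpty_descending_chain.2 ⟨?_⟩⟩
    rintro ⟨p, hp⟩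
    exact hfp ⟨p, (strictAnti_nat_of_succ_lt hp).injective,
      fun n => Or.inr ((hle _ _).1 (hp n).le)⟩
  have wf2 : WellFoundedLT Xᵒᵈ := by
    refine ⟨wellFounded_iff_isEmpty_descending_chain.2 ⟨?_⟩⟩
    rintro ⟨p, hp⟩
    exact hfp ⟨fun n => OrderDual.ofDual (p n), (strictAnti_nat_of_succ_lt hp).injective,
      fun n => Or.inl ((hle _ _).1 (OrderDual.ofDual_le_ofDual.2 (hp n).le))⟩
  choose U hU using up_witness wf1 hcore'
  choose D hD using up_witness (P := Xᵒᵈ) wf2 (fun r h1 h2 h3 =>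
    hcore' r (fun a b hab => h1 (a := b) (b := a) hab) h2 (fun x => (h3 x).symm))
  let D' : X → Finset X := D
  let N : X → Finset X := fun x => U x ∪ D' x
  have hN : ¬ ∃ p : ℕ → X, Function.Injective p ∧ ∀ n, p (n + 1) ∈ N (p n) := by
    rintro ⟨p, hp, h⟩
    refine hfp ⟨p, hp, fun n => ?_⟩
    rcases Finset.mem_union.1 (h n) with h | h
    · exact Or.inl ((hle _ _).1 ((hU _).1 _ h).le)
    · exact Or.inr ((hle _ _).1 ((hD (p n)).1 _ h).le)
  refine Set.Subset.antisymm ?_ (Set.singleton_subset_iff.2 mem_connectedComponent)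
  intro g hg
  refine Set.mem_singleton_iff.2 (ContinuousMap.ext fun x => ?_)
  set F : Set X := {y | Relation.ReflTransGen (avoidStep N ∅) x y} with hFdef
  have hF : F.Finite := reach_finite N hN x
  have hcl : ∀ a ∈ F, ∀ y ∈ N a, y ∈ F := fun a ha y hy =>
    Relation.ReflTransGen.tail ha ⟨hy, by simp⟩
  have hup : ∀ g : C(X, X), (∀ z ∈ F, z ≤ g z) → ∀ z ∈ F, g z = z := fun g h =>
    fix_up F hF U hU (fun a ha y hy => hcl a ha y (Finset.mem_union_left _ hy)) g (hmono g) h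
  have hdown : ∀ g : C(X, X), (∀ z ∈ F, g z ≤ z) → ∀ z ∈ F, g z = z := fun g h =>
    fix_up (P := Xᵒᵈ) F hF D hD (fun a ha y hy => hcl a ha y (Finset.mem_union_right _ hy)) g
      (fun a b hab => hmono g (a := b) (b := a) hab) h
  let T : Set C(X, X) := {g | ∀ z ∈ F, g z = z}
  have hT1 : T = ⋂ z ∈ F, (fun g : C(X, X) => g z) ⁻¹' {y | y ≤ z} := by
    ext g
    simp only [Set.mem_iInter]
    exact ⟨fun h z hz => (h z hz).le, hdown g⟩
  have hT2 : T = ⋂ z ∈ F, (fun g : C(X, X) => g z) ⁻¹' {y | z ≤ y} := by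
    ext g
    simp only [Set.mem_iInter]
    exact ⟨fun h z hz => (h z hz).ge, hup g⟩
  have hTc : IsClopen T := by
    constructor
    · rw [hT2]
      exact isClosed_biInter fun z _ => (hclosed z).preimage (continuous_eval_const z)
    · rw [hT1]
      exact hF.isOpen_biInter fun z _ => (hopen z).preimage (continuous_eval_const z)
  have hid : ContinuousMap.id X ∈ T := fun z _ => rfl
  exact hTc.connectedComponent_subset hid hg x Relation.ReflTransGen.refl
end

section
/- Let X be a T0 Alexandroff space which is either a bp-space (there exists n ∈ ℕ such that every s-path in X has fewer than n elements) or a countable fp-space (X is countable and every s-path in X is finite). Then there exists a subspace X^C ⊆ X that is a C-core and a strong deformation retract of X. -/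
/-- `X` is a bp-space: there is `n : ℕ` such that every s-path in `X` (a list of pairwise
distinct points with consecutive points comparable) has fewer than `n` elements. -/
def BoundedSPaths (X : Type*) [TopologicalSpace X] : Prop :=
  ∃ n : ℕ, ∀ l : List X, l.Nodup → l.Chain' specComp → l.length < n

/-- `A` is a strong deformation retract of `X`. -/
def IsSDR {X : Type*} [TopologicalSpace X] (A : Set X) : Prop :=
  ∃ H : X × unitInterval → X, Continuous H ∧
    (∀ z, H (z, 0) = z) ∧ (∀ z, H (z, 1) ∈ A) ∧ ∀ a ∈ A, ∀ t, H (a, t) = a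

namespace FP

section core
variable {X : Type*} [TopologicalSpace X]

def le (b : Bool) (x y : X) : Prop := if b = true then x ⤳ y else y ⤳ x

def lt (b : Bool) (x y : X) : Prop := le b x y ∧ x ≠ y

theorem le_refl (b : Bool) (x : X) : le b x x := by
  unfold le; split_ifs <;> exact specializes_rfl

theorem le_trans {b : Bool} {x y z : X} (h : le b x y) (h' : le b y z) : le b x z := by
  unfold le at *; split_ifs at * with hb
  · exact h.trans h'
  · exact h'.trans h

theorem le_antisymm [T0Space X] {b : Bool} {x y : X} (h : le b x y) (h' : le b y x) : x = y := by
  unfold le at *; split_ifs at * with hb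
  · exact (h.antisymm h').eq
  · exact (h'.antisymm h).eq

theorem lt_of_le_of_lt [T0Space X] {b : Bool} {x y z : X} (h : le b x y) (h' : lt b y z) :
    lt b x z := by
  refine ⟨le_trans h h'.1, ?_⟩
  rintro rfl
  exact h'.2 (le_antisymm h'.1 h)

theorem lt_of_lt_of_le [T0Space X] {b : Bool} {x y z : X} (h : lt b x y) (h' : le b y z) :
    lt b x z := by
  refine ⟨le_trans h.1 h', ?_⟩
  rintro rfl
  exact h.2 (le_antisymm h.1 h')

theorem specLE_iff {x y : X} : specLE x y ↔ x ⤳ y := by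
  unfold specLE; exact specializes_iff_mem_closure.symm

theorem comp_of_le {b : Bool} {x y : X} (h : le b x y) : specComp x y := by
  unfold le at h; unfold specComp; simp only [specLE_iff]
  split_ifs at h
  · exact Or.inl h
  · exact Or.inr h

theorem noinf (h : BoundedSPaths X) : NoInfiniteSPath X := by
  rintro ⟨p, hp, hc⟩
  obtain ⟨n, hn⟩ := h
  have := hn ((List.range n).map p) (List.nodup_range.map hp) (by
    show List.IsChain specComp _
    rw [List.isChain_iff_getElem]
    intro i hi
    simpa using hc i)
  simp at this

theorem wf_of_noinf {q : X → X → Prop} (h : NoInfiniteSPath X)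
    (hq : ∀ p : ℕ → X, (∀ n, q (p (n+1)) (p n)) →
      Function.Injective p ∧ ∀ n, specComp (p n) (p (n+1))) : WellFounded q := by
  rw [wellFounded_iff_isEmpty_descending_chain]
  constructor
  rintro ⟨p, hp⟩
  exact h ⟨p, hq p hp⟩

theorem wf_lt [T0Space X] (h : NoInfiniteSPath X) (b : Bool) :
    WellFounded (fun y x : X => lt b x y) := by
  apply wf_of_noinf h
  intro p hp
  refine ⟨?_, fun n => comp_of_le (hp n).1⟩
  have key : ∀ m k, lt b (p m) (p (m + k + 1)) := by
    intro m k
    induction k with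
    | zero => exact hp m
    | succ k ih => exact lt_of_lt_of_le ih (hp (m + k + 1)).1
  intro m n hmn
  rcases Nat.lt_trichotomy m n with hl | hl | hl
  · obtain ⟨k, rfl⟩ := Nat.exists_eq_add_of_lt hl
    exact absurd hmn (key m k).2
  · exact hl
  · obtain ⟨k, rfl⟩ := Nat.exists_eq_add_of_lt hl
    exact absurd hmn.symm (key n k).2

/-- Homotopy lemma. -/
theorem sdr [AlexandrovDiscrete X] (hfp : NoInfiniteSPath X)
    (e : X → ℝ) (τ : X → Bool) (f : X → X)
    (h0 : ∀ x, 0 < e x)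
    (hτ : ∀ x y, e x < 1 → e x = e y → τ x = τ y)
    (h1 : ∀ x, e x < 1 → e x < e (f x))
    (h2 : ∀ x, e x < 1 → le (τ x) x (f x))
    (h3 : ∀ x y, e x < 1 → lt (τ x) x y → e x < e y → le (τ x) (f x) y)
    (h4 : ∀ x y, e x < 1 → e x = e y → x ⤳ y → f x ⤳ f y) :
    IsSDR {x : X | ¬ e x < 1} := by
  classical
  have hwf : WellFounded (fun y x : X => e x < 1 ∧ y = f x) := by
    apply wf_of_noinf hfp
    intro p hp
    constructor
    · have : StrictMono (fun n => e (p n)) := by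
        apply strictMono_nat_of_lt_succ
        intro n
        rw [(hp n).2]
        exact h1 _ (hp n).1
      exact fun m n hmn => this.injective (by simp only [hmn])
    · intro n
      rw [(hp n).2]
      exact comp_of_le (h2 _ (hp n).1)
  let rem : ℝ → X → Prop := fun t x => e x < 1 ∧ (e x < t ∨ (e x = t ∧ τ x = true))
  let H : ℝ → X → X := fun t => hwf.fix (fun x ih => if h : rem t x then ih (f x) ⟨h.1, rfl⟩ else x)
  have Hpos : ∀ t x, rem t x → H t x = H t (f x) := by
    intro t x h
    show hwf.fix _ x = _
    rw [hwf.fix_eq, dif_pos h]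
  have Hneg : ∀ t x, ¬ rem t x → H t x = x := by
    intro t x h
    show hwf.fix _ x = _
    rw [hwf.fix_eq, dif_neg h]
  -- monotone
  have Hmono : ∀ t x y, x ⤳ y → H t x ⤳ H t y := by
    intro t x
    induction x using hwf.induction with
    | _ x ihx =>
    intro y
    induction y using hwf.induction with
    | _ y ihy =>
    intro hxy
    by_cases hne : x = y
    · subst hne; exact specializes_rfl
    rcases lt_trichotomy (e x) (e y) with hl | hl | hl
    · by_cases hx : rem t x
      · rw [Hpos t x hx]
        refine ihx _ ⟨hx.1, rfl⟩ y ?_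
        have a2 := h2 x hx.1
        have a3 := h3 x y hx.1
        cases hb : τ x
        · simp only [hb, le] at a2
          exact Specializes.trans (by simpa using a2) hxy
        · simp only [hb, le, lt] at a3
          simpa using a3 ⟨by simpa using hxy, hne⟩ hl
      · have hy : ¬ rem t y := by
          rintro ⟨u, v⟩
          apply hx
          refine ⟨hl.trans u, Or.inl ?_⟩
          rcases v with v | v
          · exact hl.trans v
          · exact v.1 ▸ hl
        rw [Hneg t x hx, Hneg t y hy]; exact hxy
    · by_cases hx : rem t x
      · have hy : rem t y := by
          obtain ⟨u, v⟩ := hx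
          have := hτ x y u hl
          refine ⟨hl ▸ u, ?_⟩
          rw [← hl, ← this]; exact v
        rw [Hpos t x hx, Hpos t y hy]
        exact ihx _ ⟨hx.1, rfl⟩ _ (h4 x y hx.1 hl hxy)
      · have hy : ¬ rem t y := by
          rintro ⟨u, v⟩
          apply hx
          have := hτ y x u hl.symm
          refine ⟨hl ▸ u, ?_⟩
          rw [hl, ← this]; exact v
        rw [Hneg t x hx, Hneg t y hy]; exact hxy
    · by_cases hy : rem t y
      · rw [Hpos t y hy]
        refine ihy _ ⟨hy.1, rfl⟩ ?_
        have a2 := h2 y hy.1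
        have a3 := h3 y x hy.1
        cases hb : τ y
        · simp only [hb, le, lt] at a3
          simpa using a3 ⟨by simpa using hxy, Ne.symm hne⟩ hl
        · simp only [hb, le] at a2
          exact hxy.trans (by simpa using a2)
      · have hx : ¬ rem t x := by
          rintro ⟨u, v⟩
          apply hy
          refine ⟨hl.trans u, Or.inl ?_⟩
          rcases v with v | v
          · exact hl.trans v
          · exact v.1 ▸ hl
        rw [Hneg t x hx, Hneg t y hy]; exact hxy
  have Hcont : ∀ x t, ∀ᶠ s in nhds t, H s x ⤳ H t x := by
    intro x
    induction x using hwf.induction with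
    | _ x ih =>
    intro t
    by_cases hx : e x < 1
    · rcases lt_trichotomy (e x) t with hl | hl | hl
      · filter_upwards [lt_mem_nhds hl, ih _ ⟨hx, rfl⟩ t] with s hs hs'
        rw [Hpos s x ⟨hx, Or.inl hs⟩, Hpos t x ⟨hx, Or.inl hl⟩]
        exact hs'
      · have hf := h1 x hx
        have hlt : ∀ s, s < e (f x) → H s (f x) = f x := by
          intro s hs
          apply Hneg
          rintro ⟨_, v | v⟩
          · exact absurd v (not_lt.2 hs.le)
          · exact absurd v.1 (ne_of_gt hs)
        have a2 := h2 x hx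
        filter_upwards [gt_mem_nhds (hl ▸ hf)] with s hs
        cases hb : τ x
        · have ht : H t x = x := Hneg _ _ (by
            rintro ⟨_, v | v⟩
            · exact absurd v (by simp [hl])
            · simp [hb] at v)
          rw [ht]
          by_cases hr : rem s x
          · rw [Hpos s x hr, hlt s hs]
            simpa [hb, le] using a2
          · rw [Hneg s x hr]
        · have ht : H t x = f x := by
            rw [Hpos t x ⟨hx, Or.inr ⟨hl, hb⟩⟩, hlt t (hl ▸ hf)]
          rw [ht]
          by_cases hr : rem s x
          · rw [Hpos s x hr, hlt s hs]
          · rw [Hneg s x hr]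
            simpa [hb, le] using a2
      · have : ∀ s, s < e x → H s x = x := by
          intro s hs
          apply Hneg
          rintro ⟨_, v | v⟩
          · exact absurd v (not_lt.2 hs.le)
          · exact absurd v.1 (ne_of_gt hs)
        filter_upwards [gt_mem_nhds hl] with s hs
        rw [this s hs, this t hl]
    · refine Filter.Eventually.of_forall fun s => ?_
      rw [Hneg s x (fun h => hx h.1), Hneg t x (fun h => hx h.1)]
  refine ⟨fun z => H (z.2 : ℝ) z.1, ?_, ?_, ?_, ?_⟩
  · rw [continuous_def]
    intro U hU
    rw [isOpen_iff_mem_nhds]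
    rintro ⟨x, t⟩ hxt
    have e1 : ∀ᶠ s : unitInterval in nhds t, H (s : ℝ) x ⤳ H (t : ℝ) x :=
      (continuous_subtype_val.tendsto t).eventually (Hcont x t)
    have e2 : ∀ᶠ y in nhds x, y ⤳ x := by
      have : nhdsKer {x} ∈ nhds x := isOpen_nhdsKer.mem_nhds (subset_nhdsKer rfl)
      filter_upwards [this] with y hy
      rwa [mem_nhdsKer_singleton] at hy
    rw [nhds_prod_eq]
    filter_upwards [e2.prod_mk e1] with z hz
    exact ((Hmono _ _ _ hz.1).trans hz.2).mem_open hU hxt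
  · intro z
    apply Hneg
    rintro ⟨_, v | v⟩
    · exact absurd v (not_lt.2 (by simpa using (h0 z).le))
    · have := h0 z
      simp only [Set.Icc.coe_zero] at v
      linarith [v.1]
  · intro z
    show ¬ e (H ((1 : unitInterval) : ℝ) z) < 1
    induction z using hwf.induction with
    | _ z ih =>
    by_cases hz : e z < 1
    · rw [Hpos _ z ⟨hz, Or.inl (by simpa using hz)⟩]
      exact ih _ ⟨hz, rfl⟩
    · rw [Hneg _ z (fun h => hz h.1)]; exact hz
  · intro a ha t
    exact Hneg _ _ (fun h => ha h.1)

def Beat (b : Bool) (A : Set X) (x : X) : Prop :=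
  ∃ z ∈ A, lt b x z ∧ ∀ y ∈ A, lt b x y → le b z y

theorem ker_exists (b : Bool) (hwf : WellFounded (fun y x : X => lt b x y)) (A : Set X) :
    ∃ K : Set X, ∀ x, x ∈ K ↔ x ∈ A ∧ ¬ Beat b K x := by
  let P : X → Prop := hwf.fix (fun x ih => x ∈ A ∧ ¬ ∃ z, ∃ h : lt b x z, ih z h ∧
    ∀ y (h' : lt b x y), ih y h' → le b z y)
  have hP : ∀ x, P x = (x ∈ A ∧ ¬ ∃ z, ∃ _ : lt b x z, P z ∧
    ∀ y (_ : lt b x y), P y → le b z y) := by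
    intro x
    show hwf.fix _ x = _
    rw [hwf.fix_eq]
  refine ⟨{x | P x}, fun x => ?_⟩
  show P x ↔ _
  rw [hP x]
  refine and_congr_right fun _ => not_congr ?_
  constructor
  · rintro ⟨z, h, hz, hy⟩
    exact ⟨z, hz, h, fun y h1 h2 => hy y h2 h1⟩
  · rintro ⟨z, hz, h, hy⟩
    exact ⟨z, h, hz, fun y h1 h2 => hy y h2 h1⟩

theorem ker_beat [T0Space X] {b : Bool} (hwf : WellFounded (fun y x : X => lt b x y)) {A K : Set X}
    (hK : ∀ x, x ∈ K ↔ x ∈ A ∧ ¬ Beat b K x) {x : X} (hx : x ∈ A) (hxK : x ∉ K) :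
    ∃ x' ∈ A, le b x x' ∧ Beat b A x' := by
  obtain ⟨m, ⟨hm, hmK, hxm⟩, hmin⟩ := hwf.has_min {y | y ∈ A ∧ y ∉ K ∧ le b x y} ⟨x, hx, hxK, le_refl b x⟩
  refine ⟨m, hm, hxm, ?_⟩
  have : Beat b K m := by
    by_contra h
    exact hmK ((hK m).2 ⟨hm, h⟩)
  obtain ⟨z, hz, hmz, hy⟩ := this
  refine ⟨z, ((hK z).1 hz).1, hmz, fun y hyA hmy => hy y ?_ hmy⟩
  by_contra hyK
  exact hmin y ⟨hyA, hyK, le_trans hxm hmy.1⟩ hmy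

theorem ccore [T0Space X] (hwf : ∀ b, WellFounded (fun y x : X => lt b x y)) {A : Set X}
    (hA : ∀ b, ∀ x ∈ A, ¬ Beat b A x) : IsCCore A := by
  intro r hr _ hcomp
  by_contra hne
  have hmap : ∀ b (x y : A), le b (x : X) y → le b (r x : X) (r y) := by
    intro b x y h
    unfold le at *
    split_ifs at * with hb
    · exact (subtype_specializes_iff _ _).1 (((subtype_specializes_iff _ _).2 h).map hr)
    · exact (subtype_specializes_iff _ _).1 (((subtype_specializes_iff _ _).2 h).map hr)
  have hc : ∀ x : A, (∃ b, le b (x : X) (r x)) := by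
    intro x
    rcases hcomp x with h | h
    · refine ⟨false, ?_⟩
      simpa [le] using (subtype_specializes_iff _ _).1 (specLE_iff.1 h)
    · refine ⟨true, ?_⟩
      simpa [le] using (subtype_specializes_iff _ _).1 (specLE_iff.1 h)
  obtain ⟨x, hx⟩ : ∃ x, r x ≠ x := by
    by_contra h
    push Not at h
    exact hne (funext h)
  obtain ⟨b, hb⟩ := hc x
  obtain ⟨m, ⟨hmA, hm⟩, hmin⟩ := (hwf b).has_min {y : X | ∃ h : y ∈ A, lt b y (r ⟨y, h⟩)}
    ⟨x, x.2, hb, fun h => hx (Subtype.ext h.symm)⟩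
  apply hA b m hmA
  refine ⟨r ⟨m, hmA⟩, (r ⟨m, hmA⟩).2, hm, fun y hy hmy => ?_⟩
  have h1 := hmap b ⟨m, hmA⟩ ⟨y, hy⟩ hmy.1
  obtain ⟨c, hcy⟩ := hc ⟨y, hy⟩
  by_cases hcb : c = b
  · subst hcb
    by_cases hye : y = r ⟨y, hy⟩
    · exact hye ▸ h1
    · exact absurd hmy (hmin y ⟨hy, hcy, hye⟩)
  · refine le_trans h1 ?_
    unfold le at hcy ⊢
    cases b <;> cases c <;> simp_all

theorem exists_rec.{v, w} {Y : Type w} (step : Set Y → Set Y) :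
    ∃ A : Ordinal.{v} → Set Y, ∀ α x, x ∈ A α ↔ ∀ β < α, x ∈ step (A β) := by
  have hwf : WellFounded (fun a b : Ordinal.{v} => a < b) := wellFounded_lt
  let A : Ordinal.{v} → Set Y := hwf.fix (fun α ih => {x | ∀ β, ∀ h : β < α, x ∈ step (ih β h)})
  refine ⟨A, fun α x => ?_⟩
  have : A α = {x | ∀ β, ∀ h : β < α, x ∈ step (A β)} := by
    show hwf.fix _ α = _
    rw [hwf.fix_eq]
  rw [this]; rfl

end core

end FP

theorem FP_main.{w} {X : Type w} [TopologicalSpace X] [AlexandrovDiscrete X] [T0Space X]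
    (h : BoundedSPaths X ∨ (Countable X ∧ NoInfiniteSPath X)) :
    ∃ XC : Set X, IsCCore ↥XC ∧ IsSDR XC := by
  classical
  have hfp : NoInfiniteSPath X := h.elim FP.noinf And.right
  have hwf := FP.wf_lt hfp
  choose K hK using fun b => FP.ker_exists b (hwf b)
  let typ : Set X → Bool := fun A => decide (∃ x ∈ A, FP.Beat true A x)
  have htyp : ∀ A, typ A = true ↔ ∃ x ∈ A, FP.Beat true A x := fun A => by simp [typ]
  let step : Set X → Set X := fun A => K (typ A) A
  have hstep : ∀ A x, x ∈ step A ↔ x ∈ A ∧ ¬ FP.Beat (typ A) (step A) x :=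
    fun A x => hK (typ A) A x
  have hnb : ∀ A, ∀ x ∈ step A, ¬ FP.Beat (typ A) (step A) x := fun A x hx => ((hstep A x).1 hx).2
  obtain ⟨A, hA⟩ := FP.exists_rec.{w, w} step
  have hsub : ∀ β α, β < α → A α ⊆ step (A β) := fun β α hβ x hx => (hA α x).1 hx β hβ
  have hsucc : ∀ β, A (Order.succ β) = step (A β) := by
    intro β
    apply Set.Subset.antisymm (hsub _ _ (Order.lt_succ β))
    intro x hx
    rw [hA]
    intro γ hγ
    rcases (Order.lt_succ_iff.1 hγ).eq_or_lt with rfl | hlt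
    · exact hx
    · exact hsub γ β hlt ((hstep _ _).1 hx).1
  have hdisj : ∀ β γ x, x ∈ A β → x ∉ step (A β) → x ∈ A γ → x ∉ step (A γ) → β = γ := by
    intro β γ x h1 h2 h3 h4
    rcases lt_trichotomy β γ with hl | hl | hl
    · exact absurd (hsub _ _ hl h3) h2
    · exact hl
    · exact absurd (hsub _ _ hl h1) h4
  -- termination
  obtain ⟨α, hα, hcount⟩ : ∃ α, step (A α) = A α ∧
      (Countable X ∨ (Set.Iic α).Countable) := by
    rcases h with ⟨n, hn⟩ | ⟨hc, _⟩
    · have hsuccN : ∀ k : ℕ, A ((k + 1 : ℕ) : Ordinal) = step (A (k : Ordinal)) := by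
        intro k
        rw [← hsucc]; congr 1
      have key : ∀ (k : ℕ) x, x ∈ A ((k + 2 : ℕ) : Ordinal) → x ∉ step (A ((k + 2 : ℕ) : Ordinal)) →
          ∃ y, y ∈ A ((k + 1 : ℕ) : Ordinal) ∧ y ∉ step (A ((k + 1 : ℕ) : Ordinal)) ∧
            specComp x y := by
        intro k x hx hx'
        have e1 := hsuccN k
        have e2 := hsuccN (k + 1)
        obtain ⟨x', hx'A, hxx', hbeat⟩ := FP.ker_beat (hwf _) (hstep _) hx hx'
        generalize hb : typ (A ((k + 2 : ℕ) : Ordinal)) = b at hxx' hbeat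
        have c1 : typ (A ((k + 1 : ℕ) : Ordinal)) ≠ b := by
          rintro rfl
          refine hnb (A ((k + 1 : ℕ) : Ordinal)) x' ?_ ?_
          · rw [← e2]; exact hx'A
          · rw [← e2]; exact hbeat
        have c2 : ∀ z ∈ A ((k + 1 : ℕ) : Ordinal), ¬ FP.Beat b (A ((k + 1 : ℕ) : Ordinal)) z := by
          cases b
          · have t1 : typ (A ((k + 1 : ℕ) : Ordinal)) = true := by simpa using c1
            obtain ⟨w, hw, hwb⟩ := (htyp _).1 t1
            have t0 : typ (A (k : Ordinal)) = false := by
              by_contra hcon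
              have t2 : typ (A (k : Ordinal)) = true := by simpa using hcon
              have := hnb (A (k : Ordinal)) w (e1 ▸ hw)
              rw [t2, ← e1] at this
              exact this hwb
            intro z hz
            have := hnb (A (k : Ordinal)) z (e1 ▸ hz)
            rwa [t0, ← e1] at this
          · intro z hz hzb
            exact c1 ((htyp _).2 ⟨z, hz, hzb⟩)
        have hstepsub : A ((k + 2 : ℕ) : Ordinal) ⊆ A ((k + 1 : ℕ) : Ordinal) := by
          intro z hz
          rw [e2] at hz
          exact ((hstep _ _).1 hz).1
        by_contra hcon
        push Not at hcon
        apply c2 x' (hstepsub hx'A)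
        obtain ⟨z, hz, hxz, hzy⟩ := hbeat
        refine ⟨z, hstepsub hz, hxz, fun y hy hxy => hzy y ?_ hxy⟩
        by_contra hyn
        exact hcon y hy (by rw [← e2]; exact hyn) (FP.comp_of_le (FP.le_trans hxx' hxy.1))
      have path : ∀ (k : ℕ) x, x ∈ A ((k + 1 : ℕ) : Ordinal) → x ∉ step (A ((k + 1 : ℕ) : Ordinal)) →
          ∃ l : List X, (x :: l).Nodup ∧ List.IsChain specComp (x :: l) ∧ (x :: l).length = k + 1 ∧
            ∀ y ∈ x :: l, ∃ j ≤ k, y ∈ A ((j + 1 : ℕ) : Ordinal) ∧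
              y ∉ step (A ((j + 1 : ℕ) : Ordinal)) := by
        intro k
        induction k with
        | zero =>
          intro x hx hx'
          refine ⟨[], by simp, by simp, by simp, ?_⟩
          intro y hy
          obtain rfl : y = x := by simpa using hy
          exact ⟨0, le_rfl, hx, hx'⟩
        | succ k ih =>
          intro x hx hx'
          obtain ⟨y, hy, hy', hxy⟩ := key k x hx hx'
          obtain ⟨l, l1, l2, l3, l4⟩ := ih y hy hy'
          refine ⟨y :: l, ?_, ?_, ?_, ?_⟩
          · refine List.nodup_cons.2 ⟨fun hmem => ?_, l1⟩
            obtain ⟨j, hj, j1, j2⟩ := l4 x hmem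
            have := hdisj _ _ x hx hx' j1 j2
            have := Nat.cast_injective (R := Ordinal) this
            omega
          · exact List.isChain_cons_cons.2 ⟨hxy, l2⟩
          · simp only [List.length_cons] at l3 ⊢
            omega
          · intro z hz
            rcases List.mem_cons.1 hz with rfl | hz
            · exact ⟨k + 1, le_rfl, hx, hx'⟩
            · obtain ⟨j, hj, hh⟩ := l4 z hz
              exact ⟨j, by omega, hh⟩
      refine ⟨((n + 1 : ℕ) : Ordinal), ?_, Or.inr ?_⟩
      · apply Set.Subset.antisymm (fun x hx => ((hstep _ _).1 hx).1)
        intro x hx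
        by_contra hx'
        obtain ⟨l, l1, l2, l3, _⟩ := path n x hx hx'
        have := hn (x :: l) l1 l2
        omega
      · refine (Set.countable_range (fun k : ℕ => (k : Ordinal))).mono ?_
        intro β hβ
        obtain ⟨k, hk⟩ := Ordinal.lt_omega0.1 (lt_of_le_of_lt hβ (Ordinal.natCast_lt_omega0 _))
        exact ⟨k, hk.symm⟩
    · by_contra hcon
      push Not at hcon
      have : ∀ α, ∃ x, x ∈ A α ∧ x ∉ step (A α) := by
        intro α
        by_contra hh
        push Not at hh
        refine (not_countable_iff.2 (hcon α ?_).1) hc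
        exact Set.Subset.antisymm (fun x hx => ((hstep _ _).1 hx).1) hh
      choose g hg using this
      refine not_injective_of_ordinal g ?_
      intro β γ hβγ
      refine hdisj β γ (g β) (hg β).1 (hg β).2 ?_ ?_
      · rw [hβγ]; exact (hg γ).1
      · rw [hβγ]; exact (hg γ).2
  -- levels
  have hlev : ∀ x, ∃ β ≤ α, x ∈ A β ∧ (β < α → x ∉ step (A β)) := by
    intro x
    by_cases hx : x ∈ A α
    · exact ⟨α, le_rfl, hx, fun hh => absurd hh (lt_irrefl _)⟩
    · have hne : ∃ β, β < α ∧ x ∉ step (A β) := by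
        rw [hA] at hx
        push Not at hx
        exact hx
      obtain ⟨β, ⟨h1, h2⟩, hmin⟩ := (wellFounded_lt (α := Ordinal)).has_min
        {β | β < α ∧ x ∉ step (A β)} hne
      refine ⟨β, h1.le, ?_, fun _ => h2⟩
      rw [hA]
      intro γ hγ
      by_contra hcon
      exact hmin γ ⟨hγ.trans h1, hcon⟩ hγ
  choose lev hlevle hlevA hlevs using hlev
  have hrange : (Set.range lev).Countable := by
    rcases hcount with hc | hc
    · exact Set.countable_range lev
    · refine hc.mono ?_
      rintro _ ⟨x, rfl⟩
      exact hlevle x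
  have : Countable (Set.range lev) := hrange.to_subtype
  have : Nontrivial (Set.Ioo (0 : ℝ) 1) :=
    ⟨⟨⟨1/2, by norm_num⟩, ⟨1/3, by norm_num⟩, by
      intro hh
      have := congrArg Subtype.val hh
      norm_num at this⟩⟩
  obtain ⟨ι⟩ := Order.embedding_from_countable_to_dense (Set.range lev) (Set.Ioo (0 : ℝ) 1)
  let e : X → ℝ := fun x => if lev x < α then (ι ⟨lev x, Set.mem_range_self x⟩ : ℝ) else 2
  have epos : ∀ x, lev x < α → e x = (ι ⟨lev x, Set.mem_range_self x⟩ : ℝ) := fun x hx => if_pos hx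
  have eneg : ∀ x, ¬ lev x < α → e x = 2 := fun x hx => if_neg hx
  have elt : ∀ x, e x < 1 ↔ lev x < α := by
    intro x
    by_cases hx : lev x < α
    · simp only [hx, iff_true]; rw [epos x hx]; exact (ι _).2.2
    · simp only [hx, iff_false]; rw [eneg x hx]; norm_num
  have ecmp : ∀ x y, lev x < α → (e x < e y ↔ lev x < lev y) := by
    intro x y hx
    by_cases hy : lev y < α
    · rw [epos x hx, epos y hy, Subtype.coe_lt_coe, ι.lt_iff_lt, Subtype.mk_lt_mk]
    · rw [epos x hx, eneg y hy]
      have := (ι ⟨lev x, Set.mem_range_self x⟩).2.2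
      exact ⟨fun _ => hx.trans_le (not_lt.1 hy), fun _ => by linarith⟩
  have eeq : ∀ x y, lev x < α → e x = e y → lev x = lev y := by
    intro x y hx hxy
    have hy : lev y < α := by rw [← elt, ← hxy, elt]; exact hx
    have h1 := ecmp x y hx
    have h2 := ecmp y x hy
    rw [hxy] at h1 h2
    simp only [lt_irrefl, false_iff, not_lt] at h1 h2
    exact le_antisymm h2 h1
  have hf : ∀ x, ∃ z, lev x < α → z ∈ step (A (lev x)) ∧ FP.lt (typ (A (lev x))) x z ∧
      ∀ y ∈ step (A (lev x)), FP.lt (typ (A (lev x))) x y → FP.le (typ (A (lev x))) z y := by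
    intro x
    by_cases hx : lev x < α
    · have : FP.Beat (typ (A (lev x))) (step (A (lev x))) x := by
        by_contra hcon
        exact hlevs x hx ((hstep _ _).2 ⟨hlevA x, hcon⟩)
      obtain ⟨z, h1, h2, h3⟩ := this
      exact ⟨z, fun _ => ⟨h1, h2, h3⟩⟩
    · exact ⟨x, fun hh => absurd hh hx⟩
  choose f hf using hf
  have hset : {x : X | ¬ e x < 1} = A α := by
    ext x
    simp only [Set.mem_ofPred_eq, elt]
    constructor
    · intro hx
      have := le_antisymm (hlevle x) (not_lt.1 hx)
      rw [← this]; exact hlevA x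
    · intro hx hlt
      exact hlevs x hlt (hsub _ _ hlt hx)
  refine ⟨A α, ?_, ?_⟩
  · apply FP.ccore hwf
    have ht : typ (A α) = false := by
      by_contra hcon
      have ht : typ (A α) = true := by simpa using hcon
      obtain ⟨w, hw, hwb⟩ := (htyp _).1 ht
      have := hnb (A α) w (by rw [hα]; exact hw)
      rw [ht, hα] at this
      exact this hwb
    intro b x hx
    cases b
    · have := hnb (A α) x (by rw [hα]; exact hx)
      rwa [ht, hα] at this
    · intro hb
      have := (htyp _).2 ⟨x, hx, hb⟩
      simp [ht] at this
  · rw [← hset]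
    refine FP.sdr hfp e (fun x => typ (A (lev x))) f ?_ ?_ ?_ ?_ ?_ ?_
    · intro x
      by_cases hx : lev x < α
      · rw [epos x hx]; exact (ι _).2.1
      · rw [eneg x hx]; norm_num
    · intro x y hx hxy
      show typ (A (lev x)) = typ (A (lev y))
      rw [eeq x y ((elt x).1 hx) hxy]
    · intro x hx
      rw [elt] at hx
      rw [ecmp x _ hx]
      by_contra hcon
      have hle := not_lt.1 hcon
      have h1 := (hf x hx).1
      apply hlevs (f x) (hle.trans_lt hx)
      rcases hle.eq_or_lt with he | hlt
      · rw [he]; exact h1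
      · exact hsub _ _ hlt ((hstep _ _).1 h1).1
    · intro x hx
      exact (hf x ((elt x).1 hx)).2.1.1
    · intro x y hx hxy hlt
      have hx' := (elt x).1 hx
      exact (hf x hx').2.2 y (hsub _ _ ((ecmp x y hx').1 hlt) (hlevA y)) hxy
    · intro x y hx hxy hs
      have hx' := (elt x).1 hx
      have hl := eeq x y hx' hxy
      have hy' : lev y < α := hl ▸ hx'
      obtain ⟨a1, a2, a3⟩ := hf x hx'
      obtain ⟨b1, b2, b3⟩ := hf y hy'
      rw [← hl] at b1 b2 b3
      cases hb : typ (A (lev x))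
      · rw [hb] at a2 a3 b2 b3
        have hyx : FP.le false y x := by simpa [FP.le] using hs
        have := b3 _ a1 (FP.lt_of_le_of_lt hyx a2)
        simpa [FP.le] using this
      · rw [hb] at a2 a3 b2 b3
        have hyx : FP.le true x y := by simpa [FP.le] using hs
        have := a3 _ b1 (FP.lt_of_le_of_lt hyx b2)
        simpa [FP.le] using this


/-- Every T0 Alexandroff bp-space, and every countable T0 Alexandroff fp-space, has a
C-core as its strong deformation retract. -/
theorem stmt19 {X : Type*} [TopologicalSpace X] [AlexandrovDiscrete X] [T0Space X]
    (h : BoundedSPaths X ∨ (Countable X ∧ NoInfiniteSPath X)) :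
    ∃ XC : Set X, IsCCore ↥XC ∧ IsSDR XC := by
  exact FP_main h
end
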